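/- arXiv:2208.08488 — 3 statements merged into one kernel-verified Lean document; each statement's English description precedes it below -/
import Mathlib

section
/- Every spider graph is odd prime. -/
/-- A simple graph `G` of order `n` is *odd prime* if there is an injective labeling
of its vertices by odd integers from `{1, 3, ..., 2n-1}` such that the labels of
adjacent vertices are relatively prime. -/
def IsOddPrime {V : Type*} [Fintype V] (G : SimpleGraph V) : Prop :=
  ∃ ℓ : V → ℕ, Function.Injective ℓ ∧
    (∀ v, Odd (ℓ v) ∧ ℓ v ≤ 2 * Fintype.card V - 1) ∧
    ∀ u v, G.Adj u v → Nat.Coprime (ℓ u) (ℓ v)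

/-!
Deleting the centre of a spider leaves a disjoint union of paths, whose vertices can be listed so
that adjacent vertices are consecutive in the list. Label the centre `1` and the listed vertices
`3, 5, 7, …`: since `1` is coprime to everything and consecutive odd numbers are coprime, this
labeling is odd prime.
-/

open SimpleGraph

section DeleteVertex

variable {V : Type*} {G : SimpleGraph V} {n : ℕ} {r u v w : V}

open Classical in
/-- The numbering of `V` that starts with `r` and continues with the numbering `f` of the other
vertices, shifted by one. -/
noncomputable def consNumbering (r : V) (f : ({r}ᶜ : Set V) → Fin n) (v : V) : Fin (n + 1) :=
  if hv : v = r then 0 else (f ⟨v, hv⟩).succ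

@[simp]
lemma consNumbering_self (r : V) (f : ({r}ᶜ : Set V) → Fin n) : consNumbering r f r = 0 :=
  dif_pos rfl

@[simp]
lemma consNumbering_coe (f : ({r}ᶜ : Set V) → Fin n) (v : ({r}ᶜ : Set V)) :
    consNumbering r f v = (f v).succ :=
  dif_neg v.2

lemma consNumbering_injective {f : ({r}ᶜ : Set V) → Fin n} (hf : Function.Injective f) :
    Function.Injective (consNumbering r f) := by
  intro u v huv
  by_cases hu : u = r <;> by_cases hv : v = r
  · rw [hu, hv]
  · lift v to ({r}ᶜ : Set V) using hv
    rw [hu, consNumbering_self, consNumbering_coe] at huv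
    exact absurd huv.symm (Fin.succ_ne_zero _)
  · lift u to ({r}ᶜ : Set V) using hu
    rw [hv, consNumbering_self, consNumbering_coe] at huv
    exact absurd huv (Fin.succ_ne_zero _)
  · lift u to ({r}ᶜ : Set V) using hu
    lift v to ({r}ᶜ : Set V) using hv
    rw [consNumbering_coe, consNumbering_coe] at huv
    rw [hf (Fin.succ_injective _ huv)]

lemma rel_consNumbering_of_adj {R : Fin (n + 1) → Fin (n + 1) → Prop}
    (hsymm : ∀ i j, R i j → R j i) {f : ({r}ᶜ : Set V) → Fin n}
    (hr : ∀ w : ({r}ᶜ : Set V), G.Adj r w → R 0 (f w).succ)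
    (hcompl : ∀ u v, (G.induce {r}ᶜ).Adj u v → R (f u).succ (f v).succ) (huv : G.Adj u v) :
    R (consNumbering r f u) (consNumbering r f v) := by
  by_cases hu : u = r
  · subst hu
    lift v to ({u}ᶜ : Set V) using huv.ne'
    simpa using hr v huv
  lift u to ({r}ᶜ : Set V) using hu
  by_cases hv : v = r
  · subst hv
    simpa using hsymm _ _ (hr u huv.symm)
  lift v to ({r}ᶜ : Set V) using hv
  simpa using hcompl u v huv

lemma exists_copy_pathGraph_succ (f : Copy (G.induce {r}ᶜ) (pathGraph n))
    (hf : ∀ w : ({r}ᶜ : Set V), G.Adj r w → (f w : ℕ) = 0) :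
    ∃ g : Copy G (pathGraph (n + 1)), g r = 0 := by
  have hadj {u v : V} : G.Adj u v →
      (pathGraph (n + 1)).Adj (consNumbering r f u) (consNumbering r f v) := by
    refine rel_consNumbering_of_adj (fun _ _ h ↦ h.symm) (fun w hw ↦ ?_) (fun u v huv ↦ ?_)
    · simp [pathGraph_adj, hf w hw]
    · simpa [pathGraph_adj] using pathGraph_adj.mp (f.toHom.map_adj huv)
  exact ⟨Hom.toCopy ⟨consNumbering r f, hadj⟩ (consNumbering_injective f.injective),
    consNumbering_self r f⟩

lemma encard_neighborSet_induce_le (G : SimpleGraph V) {s : Set V} (v : s) :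
    ((G.induce s).neighborSet v).encard ≤ (G.neighborSet v).encard :=
  ((Embedding.induce s).mapNeighborSet v).encard_le

lemma subsingleton_neighborSet_induce_compl_singleton (hw : (G.neighborSet w).encard ≤ 2)
    (hvw : G.Adj v w) :
    ((G.induce {v}ᶜ).neighborSet ⟨w, hvw.ne'⟩).Subsingleton := by
  have hdiff : (G.neighborSet w \ {v}).encard ≤ 1 := by
    rw [Set.encard_sdiff_singleton_of_mem (show v ∈ G.neighborSet w from hvw.symm)]
    exact tsub_le_iff_right.mpr (hw.trans_eq one_add_one_eq_two.symm)
  exact fun a ha b hb ↦ Subtype.ext <|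
    Set.encard_le_one_iff_subsingleton.mp hdiff ⟨ha, a.2⟩ ⟨hb, b.2⟩

end DeleteVertex

lemma coprime_two_mul_add_one_succ (k : ℕ) : Nat.Coprime (2 * k + 1) (2 * (k + 1) + 1) := by
  rw [show 2 * (k + 1) + 1 = 2 + (2 * k + 1) by ring, Nat.coprime_add_self_right,
    Nat.coprime_two_right]
  exact odd_two_mul_add_one k

lemma isOddPrime_of_induce_compl_singleton_isContained_pathGraph {V : Type*} [Fintype V]
    {G : SimpleGraph V} {r : V} {n : ℕ} (hn : n < Fintype.card V)
    (h : G.induce {r}ᶜ ⊑ pathGraph n) : IsOddPrime G := by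
  obtain ⟨f⟩ := h
  refine ⟨fun v ↦ 2 * (consNumbering r f v : ℕ) + 1, fun u v huv ↦ ?_,
    fun v ↦ ⟨odd_two_mul_add_one _, ?_⟩, fun u v ↦ ?_⟩
  · exact consNumbering_injective f.injective (Fin.ext (by simpa using huv))
  · have hlt := (consNumbering r f v).is_lt
    change 2 * (consNumbering r f v : ℕ) + 1 ≤ _
    omega
  · refine rel_consNumbering_of_adj (R := fun i j ↦ Nat.Coprime (2 * i + 1) (2 * j + 1))
      (fun _ _ h ↦ h.symm) (fun w _ ↦ by simp) (fun u v huv ↦ ?_)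
    simp only [Fin.val_succ]
    rcases pathGraph_adj.mp (f.toHom.map_adj huv) with h | h
    · exact h ▸ coprime_two_mul_add_one_succ _
    · exact h ▸ (coprime_two_mul_add_one_succ _).symm

section LinearForest

variable {V : Type*} {G : SimpleGraph V}

/-- A *linear forest* is a disjoint union of paths, encoded as an acyclic graph in which every
vertex has at most two neighbours. -/
structure IsLinearForest (G : SimpleGraph V) : Prop where
  isAcyclic : G.IsAcyclic
  encard_neighborSet_le_two : ∀ v, (G.neighborSet v).encard ≤ 2

lemma isLinearForest_induce (hG : G.IsAcyclic) {s : Set V}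
    (hs : ∀ v ∈ s, (G.neighborSet v).encard ≤ 2) : IsLinearForest (G.induce s) where
  isAcyclic := hG.induce s
  encard_neighborSet_le_two v := (encard_neighborSet_induce_le G v).trans (hs v v.2)

lemma exists_subsingleton_neighborSet_of_isAcyclic [Finite V] [Nonempty V] (hG : G.IsAcyclic) :
    ∃ v, (G.neighborSet v).Subsingleton := by
  classical
  cases nonempty_fintype V
  cases subsingleton_or_nontrivial V
  · exact ⟨Classical.arbitrary V, Set.subsingleton_of_subsingleton⟩
  obtain ⟨T, hGT, -, hT⟩ := connected_top.exists_isTree_le_of_le_of_isAcyclic le_top hG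
  obtain ⟨v, hv⟩ := hT.exists_vert_degree_one_of_nontrivial
  obtain ⟨w, -, hw⟩ := degree_eq_one_iff_existsUnique_adj.mp hv
  exact ⟨v, fun a ha b hb ↦ (hw a (hGT ha)).trans (hw b (hGT hb)).symm⟩

-- Prescribing the first vertex of the numbering is what makes the induction work: after a leaf is
-- deleted, its neighbour has to come first among the remaining vertices. The set `s` is `{v}` when
-- such a vertex `v` is prescribed, and empty otherwise.
lemma IsLinearForest.exists_copy_pathGraph [Finite V] (hG : IsLinearForest G) {n : ℕ}
    (hn : Nat.card V = n) {s : Set V} (hs : s.Subsingleton)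
    (hleaf : ∀ v ∈ s, (G.neighborSet v).Subsingleton) :
    ∃ f : Copy G (pathGraph n), ∀ v ∈ s, (f v : ℕ) = 0 := by
  induction n generalizing V with
  | zero =>
    have : IsEmpty V := Finite.card_eq_zero_iff.mp hn
    obtain ⟨f⟩ : G ⊑ pathGraph 0 := .of_isEmpty
    exact ⟨f, fun v ↦ isEmptyElim v⟩
  | succ n ih =>
    have : Nonempty V := Finite.card_pos_iff.mp (by omega)
    obtain ⟨v, hv, hsv⟩ : ∃ v, (G.neighborSet v).Subsingleton ∧ s ⊆ {v} := by
      obtain rfl | ⟨v, rfl⟩ := hs.eq_empty_or_singleton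
      · obtain ⟨v, hv⟩ := exists_subsingleton_neighborSet_of_isAcyclic hG.isAcyclic
        exact ⟨v, hv, Set.empty_subset _⟩
      · exact ⟨v, hleaf v rfl, subset_rfl⟩
    have hcard : Nat.card ({v}ᶜ : Set V) = n := by
      rw [Nat.card_coe_set_eq, Set.ncard_compl, Set.ncard_singleton, hn, Nat.add_sub_cancel]
    obtain ⟨f, hf⟩ := ih
      (isLinearForest_induce hG.isAcyclic fun w _ ↦ hG.encard_neighborSet_le_two w) hcard
      (hv.preimage Subtype.val_injective) fun w hw ↦
        subsingleton_neighborSet_induce_compl_singleton (hG.encard_neighborSet_le_two w) hw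
    obtain ⟨g, hg⟩ := exists_copy_pathGraph_succ f hf
    exact ⟨g, fun w hw ↦ by rw [hsv hw, hg, Fin.val_zero]⟩

lemma IsLinearForest.isContained_pathGraph [Finite V] (hG : IsLinearForest G) :
    G ⊑ pathGraph (Nat.card V) :=
  let ⟨f, _⟩ := hG.exists_copy_pathGraph rfl Set.subsingleton_empty (by simp)
  ⟨f⟩

end LinearForest

lemma exists_isLinearForest_induce_compl_singleton {V : Type*} [Nonempty V] {G : SimpleGraph V}
    [G.LocallyFinite] (hG : G.IsAcyclic)
    (hspider : ∀ u v : V, 3 ≤ G.degree u → 3 ≤ G.degree v → u = v) :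
    ∃ r, IsLinearForest (G.induce {r}ᶜ) := by
  obtain ⟨r, hr⟩ : ∃ r, ∀ v, 3 ≤ G.degree v → v = r := by
    by_cases h : ∃ r, 3 ≤ G.degree r
    · obtain ⟨r, hr⟩ := h
      exact ⟨r, fun v hv ↦ hspider v r hv hr⟩
    · exact ⟨Classical.arbitrary V, fun v hv ↦ absurd ⟨v, hv⟩ h⟩
  refine ⟨r, isLinearForest_induce hG fun v hv ↦ ?_⟩
  rw [Set.encard_eq_coe_toFinset_card, Set.toFinset_card, card_neighborSet_eq_degree]
  have : G.degree v < 3 := not_le.mp (mt (hr v) hv)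
  exact_mod_cast Nat.le_of_lt_succ this

theorem spider_oddPrime_general {V : Type*} [Fintype V] (G : SimpleGraph V) (r : V)
    (h : IsLinearForest (G.induce {r}ᶜ)) : IsOddPrime G := by
  refine isOddPrime_of_induce_compl_singleton_isContained_pathGraph ?_ h.isContained_pathGraph
  rw [← Nat.card_eq_fintype_card]
  exact Finite.card_subtype_lt (x := r) (by simp)

/-- Every spider graph (a tree with at most one vertex of degree 3 or more) is
odd prime. -/
theorem spider_oddPrime {V : Type*} [Fintype V] (G : SimpleGraph V)
    [DecidableRel G.Adj] (htree : G.IsTree)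
    (hspider : ∀ u v : V, 3 ≤ G.degree u → 3 ≤ G.degree v → u = v) :
    IsOddPrime G := by
  have := htree.connected.nonempty
  obtain ⟨r, hr⟩ := exists_isLinearForest_induce_compl_singleton htree.isAcyclic hspider
  exact spider_oddPrime_general G r hr
end

section
/- Every caterpillar whose maximum vertex degree is at most 5 is odd prime. -/
/-!
Cut the odd numbers `1, 3, 5, …` into consecutive blocks, one for each spine vertex in order; a
block carries the labels of the spine vertex and of the leaves hanging from it. A tree is minimal
among connected graphs, so all edges are spine edges or join a leaf to its spine vertex, and only
the choice of the spine label within each block matters. It is greedy: the first label of the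
block, or the third one if the first is a multiple of `3` and the block has at least three labels.
The first spine vertex thus gets the label `1`, so the size of its block is irrelevant. Every later
inner block has at most four labels and the last one at most five, so the labels of adjacent
vertices differ by `2 * d` with `d ∈ {1, 2, 3, 4, 6}` and are never both multiples of `3`.
-/

open Finset

section Positions

lemma coprime_of_odd_of_dvd_two_pow_mul_three_pow {n d i j : ℕ} (hn : Odd n)
    (hd : d ∣ 2 ^ i * 3 ^ j) (h₃ : ¬(3 ∣ n ∧ 3 ∣ d)) : n.Coprime d := by
  refine Nat.coprime_of_dvd fun q hq hqn hqd ↦ ?_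
  rcases hq.dvd_mul.mp (hqd.trans hd) with hq₂ | hq₃
  · obtain rfl : q = 2 := Nat.prime_eq_prime_of_dvd_pow hq Nat.prime_two hq₂
    exact hn.not_two_dvd_nat hqn
  · obtain rfl : q = 3 := Nat.prime_eq_prime_of_dvd_pow hq Nat.prime_three hq₃
    exact h₃ ⟨hqn, hqd⟩

lemma coprime_two_mul_add_one_of_le_add_six {a b : ℕ} (hab : a < b) (hba : b ≤ a + 6)
    (h₅ : b ≠ a + 5) (h₃ : a % 3 = 1 → b % 3 ≠ 1) :
    (2 * a + 1).Coprime (2 * b + 1) := by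
  obtain ⟨d, rfl⟩ := Nat.exists_eq_add_of_lt hab
  have hd : d + 1 ∣ 2 ^ 2 * 3 ^ 1 := by
    have : d < 6 := by omega
    interval_cases d <;> omega
  have hodd : Odd (2 * a + 1) := odd_two_mul_add_one a
  have hcop : (2 * a + 1).Coprime (2 * (d + 1)) :=
    (Nat.coprime_two_right.mpr hodd).mul_right
      (coprime_of_odd_of_dvd_two_pow_mul_three_pow hodd hd (by omega))
  rw [show 2 * (a + d + 1) + 1 = 2 * (d + 1) + (2 * a + 1) by ring]
  exact Nat.coprime_add_self_right.mpr hcop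

/-- Position `p` stands for the label `2 * p + 1`. The spine vertex of a block occupying the
positions in `[a, b)` takes the first one, unless the label there is a multiple of `3` and there
is room to move on to the third position. -/
def spinePosition (a b : ℕ) : ℕ :=
  if a % 3 = 1 ∧ a + 3 ≤ b then a + 2 else a

lemma spinePosition_mem_Ico {a b : ℕ} (hab : a < b) : spinePosition a b ∈ Set.Ico a b := by
  rw [Set.mem_Ico, spinePosition]
  split_ifs <;> omega

lemma spinePosition_zero (b : ℕ) : spinePosition 0 b = 0 := rfl

lemma coprime_spinePosition_of_mem_block {a b t : ℕ} (hb : a ≠ 0 → b ≤ a + 5)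
    (ht : t ∈ Set.Ico a b) (hne : t ≠ spinePosition a b) :
    (2 * spinePosition a b + 1).Coprime (2 * t + 1) := by
  obtain ⟨hat, htb⟩ := ht
  rcases eq_or_ne a 0 with rfl | ha
  · simp [spinePosition_zero]
  have hba := hb ha
  rcases lt_or_gt_of_ne hne with hlt | hgt
  · refine (coprime_two_mul_add_one_of_le_add_six hlt ?_ ?_ ?_).symm <;>
      unfold spinePosition at * <;> split_ifs at * <;> omega
  · refine coprime_two_mul_add_one_of_le_add_six hgt ?_ ?_ ?_ <;>
      unfold spinePosition at * <;> split_ifs at * <;> omega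

lemma coprime_spinePosition_spinePosition {a b c : ℕ} (hab : a < b) (hb : a ≠ 0 → b ≤ a + 4) :
    (2 * spinePosition a b + 1).Coprime (2 * spinePosition b c + 1) := by
  rcases eq_or_ne a 0 with rfl | ha
  · simp [spinePosition_zero]
  have hba := hb ha
  apply coprime_two_mul_add_one_of_le_add_six <;> unfold spinePosition <;> split_ifs <;> omega

end Positions

section Blocks

lemma exists_mapsTo_injOn_apply_eq {α β : Type*} {s : Finset α} {t : Finset β} (hst : #s ≤ #t)
    {v : α} {w : β} (hvw : v ∈ s → w ∈ t) :
    ∃ f : α → β, Set.MapsTo f s t ∧ Set.InjOn f s ∧ (v ∈ s → f v = w) := by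
  classical
  have : Nonempty β := ⟨w⟩
  obtain ⟨g, hg, hinj⟩ := s.finite_toSet.exists_injOn_of_encard_le (t := (t : Set β))
    (by simpa using hst)
  by_cases hv : v ∈ s
  · refine ⟨Equiv.swap (g v) w ∘ g, fun x hx ↦ ?_, (Equiv.injective _).comp_injOn hinj, by simp⟩
    rw [Function.comp_apply, Equiv.swap_apply_def]
    split_ifs
    exacts [hvw hv, hg hv, hg hx]
  · exact ⟨g, hg, hinj, fun h ↦ absurd h hv⟩

variable {V : Type*} [Fintype V]

/-- Listing `V` in order of increasing `f`, the fiber of `f` over `i` occupies the positions in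
`[fiberStart f i, fiberStart f (i + 1))`. -/
def fiberStart (f : V → ℕ) (i : ℕ) : ℕ := #{x | f x < i}

@[simp] lemma fiberStart_zero (f : V → ℕ) : fiberStart f 0 = 0 := by simp [fiberStart]

lemma fiberStart_succ (f : V → ℕ) (i : ℕ) :
    fiberStart f (i + 1) = fiberStart f i + #{x | f x = i} := by
  classical
  simp only [fiberStart, Nat.lt_succ_iff_lt_or_eq, filter_or]
  exact card_union_of_disjoint (disjoint_filter.mpr fun _ _ h ↦ h.ne)

lemma fiberStart_le_card (f : V → ℕ) (i : ℕ) : fiberStart f i ≤ Fintype.card V :=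
  card_le_univ _

lemma fiberStart_monotone (f : V → ℕ) : Monotone (fiberStart f) :=
  monotone_nat_of_le_succ fun i ↦ by simp [fiberStart_succ]

lemma fiberStart_lt_fiberStart_succ (f : V → ℕ) (x : V) :
    fiberStart f (f x) < fiberStart f (f x + 1) := by
  rw [fiberStart_succ]
  exact Nat.lt_add_of_pos_right (card_pos.mpr ⟨x, by simp⟩)

lemma exists_injective_mem_Ico_fiberStart (f : V → ℕ) (c : ℕ → V) (t : ℕ → ℕ)
    (ht : ∀ i, f (c i) = i → t i ∈ Set.Ico (fiberStart f i) (fiberStart f (i + 1))) :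
    ∃ pos : V → ℕ, pos.Injective ∧
      (∀ x, pos x ∈ Set.Ico (fiberStart f (f x)) (fiberStart f (f x + 1))) ∧
      ∀ i, f (c i) = i → pos (c i) = t i := by
  have hfiber : ∀ i, ∃ g : V → ℕ,
      Set.MapsTo g {x | f x = i} (Set.Ico (fiberStart f i) (fiberStart f (i + 1))) ∧
      Set.InjOn g {x | f x = i} ∧ (f (c i) = i → g (c i) = t i) := fun i ↦ by
    simpa using exists_mapsTo_injOn_apply_eq (s := {x | f x = i})
      (t := Ico (fiberStart f i) (fiberStart f (i + 1))) (v := c i) (w := t i)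
      (by simp [fiberStart_succ]) (by simpa using ht i)
  choose g hmaps hinj hgc using hfiber
  have hmem : ∀ x, g (f x) x ∈ Set.Ico (fiberStart f (f x)) (fiberStart f (f x + 1)) :=
    fun x ↦ hmaps (f x) rfl
  refine ⟨fun x ↦ g (f x) x, fun x y hxy ↦ ?_, hmem, fun i hi ↦ by simp only [hi, hgc]⟩
  have hf : f x = f y := by
    by_contra hne
    have hdisj := (fiberStart_monotone f).pairwise_disjoint_on_Ico_succ hne
    exact Set.disjoint_left.mp hdisj (hmem x) (by simpa only [hxy] using! hmem y)
  exact hinj (f x) rfl hf.symm (by simpa only [hf] using hxy)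

end Blocks

section Caterpillar

variable {V : Type*} {c : ℕ → V} {m : ℕ} {foot : V → ℕ}

/-- The caterpillar with spine `c 0, …, c m` in which every other vertex `x` hangs from
`c (foot x)`. Spine vertices are meant to be their own feet, `foot (c i) = i`; the loops this
would create are discarded by `SimpleGraph.fromRel`. -/
def caterpillar (c : ℕ → V) (m : ℕ) (foot : V → ℕ) : SimpleGraph V :=
  .fromRel fun x y ↦ y = c (foot x) ∨ ∃ i < m, x = c i ∧ y = c (i + 1)

lemma rel_of_caterpillar_adj {r : V → V → Prop} (hsymm : ∀ x y, r x y → r y x)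
    (hleaf : ∀ x, x ≠ c (foot x) → r x (c (foot x))) (hspine : ∀ i < m, r (c i) (c (i + 1)))
    {x y : V} (hxy : (caterpillar c m foot).Adj x y) : r x y := by
  obtain ⟨hne, (rfl | ⟨i, hi, rfl, rfl⟩) | (rfl | ⟨i, hi, rfl, rfl⟩)⟩ := hxy
  exacts [hleaf x hne, hspine i hi, hsymm _ _ (hleaf y hne.symm), hsymm _ _ (hspine i hi)]

lemma isOddPrime_caterpillar [Fintype V] (hle : ∀ x, foot x ≤ m) (hfoot : ∀ i ≤ m, foot (c i) = i)
    (hinner : ∀ i, 0 < i → i < m → #{x | foot x = i} ≤ 4)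
    (hlast : 0 < m → #{x | foot x = m} ≤ 5) :
    IsOddPrime (caterpillar c m foot) := by
  let a := fiberStart foot
  have hpos_of_ne {i : ℕ} (hi : a i ≠ 0) : 0 < i := by
    by_contra! h
    simp [a, Nat.le_zero.mp h] at hi
  have hlt (i : ℕ) (hi : foot (c i) = i) : a i < a (i + 1) := by
    simpa only [hi] using fiberStart_lt_fiberStart_succ foot (c i)
  have hfour (i : ℕ) (hi : i < m) (ha : a i ≠ 0) : a (i + 1) ≤ a i + 4 := by
    simpa [a, fiberStart_succ] using hinner i (hpos_of_ne ha) hi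
  have hfive (i : ℕ) (hi : i ≤ m) (ha : a i ≠ 0) : a (i + 1) ≤ a i + 5 := by
    rcases hi.lt_or_eq with hi | rfl
    · exact (hfour i hi ha).trans (by omega)
    · simpa [a, fiberStart_succ] using hlast (hpos_of_ne ha)
  obtain ⟨pos, hinj, hmem, hspine⟩ := exists_injective_mem_Ico_fiberStart foot c
    (fun i ↦ spinePosition (a i) (a (i + 1))) fun i hi ↦ spinePosition_mem_Ico (hlt i hi)
  refine ⟨fun x ↦ 2 * pos x + 1, fun x y hxy ↦ hinj (by simpa using hxy),
    fun x ↦ ⟨odd_two_mul_add_one _, ?_⟩, fun x y ↦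
      rel_of_caterpillar_adj (r := fun x y ↦ (2 * pos x + 1).Coprime (2 * pos y + 1))
        (fun _ _ ↦ .symm) (fun x hne ↦ ?_) fun i hi ↦ ?_⟩
  · have := (hmem x).2.trans_le (fiberStart_le_card foot _)
    simp only
    omega
  · have hne' := hinj.ne hne
    rw [hspine _ (hfoot _ (hle x))] at hne' ⊢
    exact (coprime_spinePosition_of_mem_block (hfive _ (hle x)) (hmem x) hne').symm
  · rw [hspine i (hfoot i hi.le), hspine (i + 1) (hfoot _ hi)]
    exact coprime_spinePosition_spinePosition (hlt i (hfoot i hi.le)) (hfour i hi)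

lemma caterpillar_connected (hle : ∀ x, foot x ≤ m) : (caterpillar c m foot).Connected := by
  have hreach {x y : V} (h : y = c (foot x) ∨ ∃ i < m, x = c i ∧ y = c (i + 1)) :
      (caterpillar c m foot).Reachable x y := by
    rcases eq_or_ne x y with rfl | hne
    · rfl
    · exact ((SimpleGraph.fromRel_adj _ _ _).mpr ⟨hne, .inl h⟩).reachable
  have hspine (i : ℕ) (hi : i ≤ m) : (caterpillar c m foot).Reachable (c 0) (c i) := by
    induction i with
    | zero => rfl
    | succ i ih => exact (ih (by omega)).trans (hreach (.inr ⟨i, hi, rfl, rfl⟩))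
  have hroot (x : V) : (caterpillar c m foot).Reachable (c 0) x :=
    (hspine _ (hle x)).trans (hreach (.inl rfl)).symm
  have : Nonempty V := ⟨c 0⟩
  exact .mk fun x y ↦ (hroot x).symm.trans (hroot y)

variable {G : SimpleGraph V}

lemma caterpillar_le (hspine : ∀ i < m, G.Adj (c i) (c (i + 1)))
    (hadj : ∀ x, x = c (foot x) ∨ G.Adj x (c (foot x))) : caterpillar c m foot ≤ G :=
  fun _ _ ↦ rel_of_caterpillar_adj (fun _ _ ↦ .symm) (fun x ↦ (hadj x).resolve_left) hspine

end Caterpillar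

section DominatingPath

variable {V : Type*} {G : SimpleGraph V}

/-- Each vertex off the path `p` is adjacent to the vertex of `p` with index `foot x`, and each
vertex on `p` is its own foot. -/
structure IsFootMap {u w : V} (p : G.Walk u w) (foot : V → ℕ) : Prop where
  le_length : ∀ x, foot x ≤ p.length
  foot_getVert : ∀ i ≤ p.length, foot (p.getVert i) = i
  eq_or_adj : ∀ x, x = p.getVert (foot x) ∨ G.Adj x (p.getVert (foot x))

lemma exists_isFootMap {u w : V} {p : G.Walk u w} (hp : p.IsPath)
    (hdom : ∀ v, v ∈ p.support ∨ ∃ x ∈ p.support, G.Adj v x) :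
    ∃ foot : V → ℕ, IsFootMap p foot := by
  have hindex (x : V) : ∃ i ≤ p.length, x = p.getVert i ∨
      x ∉ p.support ∧ G.Adj x (p.getVert i) := by
    by_cases hx : x ∈ p.support
    · obtain ⟨i, rfl, hi⟩ := SimpleGraph.Walk.mem_support_iff_exists_getVert.mp hx
      exact ⟨i, hi, .inl rfl⟩
    · obtain ⟨y, hy, hxy⟩ := (hdom x).resolve_left hx
      obtain ⟨i, rfl, hi⟩ := SimpleGraph.Walk.mem_support_iff_exists_getVert.mp hy
      exact ⟨i, hi, .inr ⟨hx, hxy⟩⟩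
  choose foot hle hfoot using hindex
  refine ⟨foot, hle, fun i hi ↦ ?_, fun x ↦ (hfoot x).imp_right And.right⟩
  rcases hfoot (p.getVert i) with h | ⟨h, -⟩
  · exact (hp.getVert_injOn hi (hle _) h).symm
  · exact absurd (p.getVert_mem_support i) h

lemma card_add_card_le_degree_add_one {v : V} [Fintype (G.neighborSet v)] {s t : Finset V}
    (hs : ∀ x ∈ s, x = v ∨ G.Adj v x) (ht : ∀ x ∈ t, G.Adj v x) (hst : Disjoint s t) :
    #s + #t ≤ G.degree v + 1 := by
  classical
  have hsub : s ∪ t ⊆ insert v (G.neighborFinset v) := by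
    intro x hx
    simp only [mem_insert, SimpleGraph.mem_neighborFinset]
    exact (mem_union.mp hx).elim (hs x) (.inr ∘ ht x)
  calc #s + #t = #(s ∪ t) := (card_union_of_disjoint hst).symm
    _ ≤ #(insert v (G.neighborFinset v)) := card_le_card hsub
    _ ≤ G.degree v + 1 := card_insert_le _ _

namespace IsFootMap

variable {u w : V} {p : G.Walk u w} {foot : V → ℕ}

lemma caterpillar_eq_of_isTree (h : IsFootMap p foot) (htree : G.IsTree) :
    caterpillar p.getVert p.length foot = G :=
  (SimpleGraph.isTree_iff_minimal_connected.mp htree).eq_of_le (caterpillar_connected h.le_length)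
    (caterpillar_le (fun _ ↦ p.adj_getVert_succ) h.eq_or_adj)

lemma adj_getVert_pred (h : IsFootMap p foot) {i : ℕ} (hi₀ : 0 < i) (hi : i ≤ p.length) :
    G.Adj (p.getVert i) (p.getVert (i - 1)) ∧ foot (p.getVert (i - 1)) ≠ i := by
  refine ⟨?_, by rw [h.foot_getVert _ (by omega)]; omega⟩
  simpa only [Nat.sub_add_cancel hi₀] using (p.adj_getVert_succ (i := i - 1) (by omega)).symm

variable [Fintype V] [DecidableRel G.Adj]

lemma card_fiber_add_card_le (h : IsFootMap p foot) {i : ℕ} {t : Finset V}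
    (ht : ∀ x ∈ t, G.Adj (p.getVert i) x ∧ foot x ≠ i) :
    #{x | foot x = i} + #t ≤ G.degree (p.getVert i) + 1 := by
  refine card_add_card_le_degree_add_one (fun x hx ↦ ?_) (fun x hx ↦ (ht x hx).1) ?_
  · obtain rfl : foot x = i := by simpa using hx
    exact (h.eq_or_adj x).imp_right .symm
  · exact disjoint_right.mpr fun x hx ↦ by simpa using (ht x hx).2

lemma card_fiber_lt_degree (h : IsFootMap p foot) {i : ℕ} (hi₀ : 0 < i) (hi : i < p.length) :
    #{x | foot x = i} < G.degree (p.getVert i) := by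
  classical
  have hnext : G.Adj (p.getVert i) (p.getVert (i + 1)) ∧ foot (p.getVert (i + 1)) ≠ i :=
    ⟨p.adj_getVert_succ hi, by rw [h.foot_getVert _ hi]; omega⟩
  have hne : p.getVert (i - 1) ≠ p.getVert (i + 1) := fun heq ↦ by
    have := congrArg foot heq
    rw [h.foot_getVert _ (by omega), h.foot_getVert _ hi] at this
    omega
  have := h.card_fiber_add_card_le (t := {p.getVert (i - 1), p.getVert (i + 1)})
    (by simpa using ⟨h.adj_getVert_pred hi₀ hi.le, hnext⟩)
  rw [card_pair hne] at this
  omega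

lemma card_fiber_le_degree (h : IsFootMap p foot) {i : ℕ} (hi₀ : 0 < i) (hi : i ≤ p.length) :
    #{x | foot x = i} ≤ G.degree (p.getVert i) := by
  simpa using h.card_fiber_add_card_le (t := {p.getVert (i - 1)})
    (by simpa using h.adj_getVert_pred hi₀ hi)

end IsFootMap

end DominatingPath

theorem caterpillar_maxDegree_le_five_oddPrime_general {V : Type*} [Fintype V]
    {G : SimpleGraph V} [DecidableRel G.Adj] (htree : G.IsTree) {u w : V} {p : G.Walk u w}
    (hp : p.IsPath) (hdom : ∀ v, v ∈ p.support ∨ ∃ x ∈ p.support, G.Adj v x)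
    (hdeg : ∀ v ≠ u, G.degree v ≤ 5) :
    IsOddPrime G := by
  obtain ⟨foot, hfoot⟩ := exists_isFootMap hp hdom
  have hdeg_getVert {i : ℕ} (hi₀ : 0 < i) (hi : i ≤ p.length) : G.degree (p.getVert i) ≤ 5 :=
    hdeg _ fun h ↦ hi₀.ne' ((hp.getVert_eq_start_iff hi).mp h)
  rw [← hfoot.caterpillar_eq_of_isTree htree]
  refine isOddPrime_caterpillar hfoot.le_length hfoot.foot_getVert (fun i hi₀ hi ↦ ?_) fun hm ↦ ?_
  · exact Nat.le_of_lt_succ ((hfoot.card_fiber_lt_degree hi₀ hi).trans_le (hdeg_getVert hi₀ hi.le))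
  · exact (hfoot.card_fiber_le_degree hm le_rfl).trans (hdeg_getVert hm le_rfl)

/-- Every caterpillar (a tree in which every vertex is within distance 1 of a
central path) whose maximum vertex degree is at most 5 is odd prime. -/
theorem caterpillar_maxDegree_le_five_oddPrime {V : Type*} [Fintype V]
    (G : SimpleGraph V) [DecidableRel G.Adj] (htree : G.IsTree)
    (hcat : ∃ (u w : V) (p : G.Walk u w), p.IsPath ∧
      ∀ v : V, v ∈ p.support ∨ ∃ x ∈ p.support, G.Adj v x)
    (hdeg : ∀ v : V, G.degree v ≤ 5) :
    IsOddPrime G := by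
  obtain ⟨_, _, _, hp, hdom⟩ := hcat
  exact caterpillar_maxDegree_le_five_oddPrime_general htree hp hdom fun v _ ↦ hdeg v
end

section
/- For all n > 1 and k ≥ 3, the firecracker graph F_{n,k} is odd prime. -/
/-- The firecracker graph `F_{n,k}`: a path `v_0, ..., v_{n-1}` (the first summand),
star centers `u_0, ..., u_{n-1}` (the second summand), and star leaves `w_{i,j}`
for `0 ≤ j < k - 2` (the third summand), with edges `v_i v_{i+1}`, `v_i u_i`,
and `u_i w_{i,j}`; in total it has `n * k` vertices. -/
def firecracker (n k : ℕ) : SimpleGraph (Fin n ⊕ (Fin n ⊕ (Fin n × Fin (k - 2)))) :=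
  SimpleGraph.fromRel (fun a b =>
    match a, b with
    | Sum.inl i, Sum.inl i' => i'.val = i.val + 1
    | Sum.inl i, Sum.inr (Sum.inl i') => i = i'
    | Sum.inr (Sum.inl i), Sum.inr (Sum.inr (i', _)) => i = i'
    | _, _ => False)

/-!
Every centre is joined to `k - 1` vertices, so the labels of the centres should have few small
prime factors. Three constructions cover all `k ≥ 3`.

* For `k ≤ 13` the `i`-th star, with its path vertex, gets the `i`-th block of `k` consecutive odd
  numbers, and a centre coprime to `6`, respectively `210`, is coprime to its block.
* For `k ≥ 14` and `n ≤ 90 k` the path gets `1, 3, …, 2n - 1` and the centres get large primes. Each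
  prime divides at most half of the remaining labels, and any remaining label is divisible by at
  most one of them, so Hall's theorem distributes these labels among the leaves.
* For `n ≥ 90 k` there are not enough primes. The centres get `1 + 6i` and the path `5 + 6i`. The
  Eratosthenes–Legendre sieve shows that a label `x` is coprime to a proportion of the labels on the
  other side that is at least `5 / 6` of the product of `1 - 1 / p` over the primes `p ≥ 5` dividing
  `x`. Since the inverse eighth moment of that product is bounded, labels of low degree are rare
  enough for Hall's theorem.
-/

namespace Firecracker

open Finset Function
open scoped Nat.Prime

/-- The labels `1, 3, ..., 2N - 1` available to a graph of order `N`. -/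
def oddLabels (N : ℕ) : Finset ℕ := {y ∈ range (2 * N) | Odd y}

lemma mem_oddLabels {N y : ℕ} : y ∈ oddLabels N ↔ y < 2 * N ∧ Odd y := by
  simp [oddLabels]

lemma two_mul_add_one_mem_oddLabels {N j : ℕ} (h : j < N) : 2 * j + 1 ∈ oddLabels N :=
  mem_oddLabels.2 ⟨by lia, odd_two_mul_add_one j⟩

lemma oddLabels_eq_image (N : ℕ) : oddLabels N = (range N).image fun j ↦ 2 * j + 1 := by
  ext y
  simp only [mem_oddLabels, mem_image, mem_range]
  constructor
  · rintro ⟨hy, j, rfl⟩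
    exact ⟨j, by lia, rfl⟩
  · rintro ⟨j, hj, rfl⟩
    exact ⟨by lia, odd_two_mul_add_one j⟩

lemma card_oddLabels (N : ℕ) : #(oddLabels N) = N := by
  rw [oddLabels_eq_image, card_image_of_injective _ fun _ _ h ↦ by lia, card_range]

/-- A partial odd prime labelling of a firecracker graph of order `N`: the path vertices get the
labels `v` and the star centres the labels `u`, while the leaves are not labelled yet. -/
structure IsSpineLabeling {n : ℕ} (N : ℕ) (v u : Fin n → ℕ) : Prop where
  injective : Injective (Sum.elim v u)
  mem_oddLabels : ∀ x, Sum.elim v u x ∈ oddLabels N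
  path_coprime : ∀ i j : Fin n, j.val = i.val + 1 → (v i).Coprime (v j)
  centre_coprime : ∀ i, (v i).Coprime (u i)

/-- The labels that a labelling of the path and the centres leaves for the leaves. -/
def leafLabels {n : ℕ} (N : ℕ) (v u : Fin n → ℕ) : Finset ℕ :=
  oddLabels N \ univ.image (Sum.elim v u)

lemma of_fromRel_adj {V : Type*} {r P : V → V → Prop} (hP : ∀ ⦃x y⦄, P x y → P y x)
    (hr : ∀ x y, r x y → P x y) {x y : V} (h : (SimpleGraph.fromRel r).Adj x y) : P x y :=
  h.2.elim (hr x y) fun h' ↦ hP (hr y x h')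

variable {n k N : ℕ} {v u : Fin n → ℕ}

lemma mem_leafLabels {y : ℕ} :
    y ∈ leafLabels N v u ↔ y ∈ oddLabels N ∧ ∀ x, Sum.elim v u x ≠ y := by
  simp only [leafLabels, mem_sdiff, mem_image, mem_univ, true_and, not_exists, ne_eq]

lemma IsSpineLabeling.card_leafLabels (h : IsSpineLabeling (n * k) v u) :
    #(leafLabels (n * k) v u) = n * (k - 2) := by
  rw [leafLabels, card_sdiff_of_subset, card_oddLabels, card_image_of_injective _ h.injective,
    card_univ, Fintype.card_sum, Fintype.card_fin, Nat.mul_sub, mul_two]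
  exact image_subset_iff.2 fun x _ ↦ h.mem_oddLabels x

lemma coprime_of_firecracker_adj {w : Fin n × Fin (k - 2) → ℕ}
    (path : ∀ i j : Fin n, j.val = i.val + 1 → (v i).Coprime (v j))
    (centre : ∀ i, (v i).Coprime (u i)) (leaf : ∀ i j, (u i).Coprime (w (i, j))) {x y}
    (h : (firecracker n k).Adj x y) :
    (Sum.elim v (Sum.elim u w) x).Coprime (Sum.elim v (Sum.elim u w) y) := by
  refine of_fromRel_adj (P := fun x y ↦ (Sum.elim v (Sum.elim u w) x).Coprime
    (Sum.elim v (Sum.elim u w) y)) (fun _ _ ↦ Nat.Coprime.symm) (fun x y hxy ↦ ?_) h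
  rcases x with i | i | ⟨i, j⟩ <;> rcases y with i' | i' | ⟨i', j'⟩ <;> simp only at hxy
  · exact path i i' hxy
  · exact hxy ▸ centre i
  · exact hxy ▸ leaf i j'

theorem IsSpineLabeling.isOddPrime (h : IsSpineLabeling (n * k) v u) (hk : 2 ≤ k)
    {w : Fin n × Fin (k - 2) → ℕ} (hw : Injective w)
    (hmem : ∀ a, w a ∈ leafLabels (n * k) v u) (hcop : ∀ a, (u a.1).Coprime (w a)) :
    IsOddPrime (firecracker n k) := by
  have hcard : Fintype.card (Fin n ⊕ (Fin n ⊕ (Fin n × Fin (k - 2)))) = n * k := by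
    obtain ⟨m, rfl⟩ := Nat.exists_eq_add_of_le' hk
    simp only [Fintype.card_sum, Fintype.card_prod, Fintype.card_fin, Nat.add_sub_cancel]
    ring
  have hlabels (x) : Sum.elim v (Sum.elim u w) x ∈ oddLabels (n * k) := by
    rcases x with i | i | a
    exacts [h.mem_oddLabels (.inl i), h.mem_oddLabels (.inr i), (mem_leafLabels.1 (hmem a)).1]
  refine ⟨Sum.elim v (Sum.elim u w), ?_, fun x ↦ ?_, fun x y hxy ↦ ?_⟩
  · obtain ⟨hv, hu, hvu⟩ := Sum.elim_injective.1 h.injective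
    refine hv.sumElim (hu.sumElim hw fun i a ↦ ?_) ?_
    · exact (mem_leafLabels.1 (hmem a)).2 (.inr i)
    · rintro i (j | a)
      exacts [hvu i j, (mem_leafLabels.1 (hmem a)).2 (.inl i)]
  · obtain ⟨hlt, hodd⟩ := Firecracker.mem_oddLabels.1 (hlabels x)
    exact ⟨hodd, by lia⟩
  · exact coprime_of_firecracker_adj h.path_coprime h.centre_coprime (fun i j ↦ hcop (i, j)) hxy

/-- The embedding of `ℕ` that starts at `1` and skips the value `c`. -/
def skip (c t : ℕ) : ℕ := if t + 1 < c then t + 1 else t + 2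

lemma skip_injective (c : ℕ) : Injective (skip c) := fun s t h ↦ by
  unfold skip at h
  split_ifs at h <;> lia

lemma skip_pos (c t : ℕ) : 0 < skip c t := by
  unfold skip
  split_ifs <;> lia

lemma skip_ne (c t : ℕ) : skip c t ≠ c := by
  unfold skip
  split_ifs <;> lia

lemma skip_le_add_two (c t : ℕ) : skip c t ≤ t + 2 := by
  unfold skip
  split_ifs <;> lia

/-- The `t`-th label of the `i`-th block of `k` consecutive odd numbers. -/
def blockLabel (k i t : ℕ) : ℕ := 2 * (k * i + t) + 1

lemma blockLabel_mem_oddLabels {i t : ℕ} (hi : i < n) (ht : t < k) :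
    blockLabel k i t ∈ oddLabels (n * k) :=
  two_mul_add_one_mem_oddLabels <| calc
    k * i + t < k * (i + 1) := by rw [mul_add_one]; lia
    _ ≤ n * k := by rw [mul_comm]; gcongr; exact hi

lemma blockLabel_inj {i j s t : ℕ} (hs : s < k) (ht : t < k) :
    blockLabel k i s = blockLabel k j t ↔ i = j ∧ s = t := by
  refine ⟨fun h ↦ ?_, by rintro ⟨rfl, rfl⟩; rfl⟩
  have h' : k * i + s = k * j + t := by unfold blockLabel at h; lia
  have hk : 0 < k := by lia
  have hij : i = j := by
    simpa only [Nat.mul_add_div hk, Nat.div_eq_of_lt hs, Nat.div_eq_of_lt ht, add_zero]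
      using congrArg (· / k) h'
  exact ⟨hij, by subst hij; lia⟩

lemma coprime_of_dist_dvd_pow {x y P e : ℕ} (hx : x.Coprime P) (h : Nat.dist x y ∣ P ^ e) :
    x.Coprime y := by
  have hdist : x.Coprime (Nat.dist x y) := (hx.pow_right e).coprime_dvd_right h
  rcases le_total x y with hxy | hxy
  · rwa [Nat.dist_eq_sub_of_le hxy, Nat.coprime_sub_self_right hxy] at hdist
  · rwa [Nat.dist_eq_sub_of_le_right hxy, Nat.coprime_self_sub_right hxy] at hdist

lemma coprime_blockLabel_zero_succ (k i : ℕ) :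
    (blockLabel k i 0).Coprime (blockLabel k (i + 1) 0) := by
  rw [show blockLabel k (i + 1) 0 = blockLabel k i 0 + 2 * k by unfold blockLabel; ring,
    Nat.coprime_self_add_right, show blockLabel k i 0 = 1 + i * (2 * k) by unfold blockLabel; ring,
    Nat.coprime_add_mul_right_left]
  exact Nat.coprime_one_left _

lemma isSpineLabeling_blocks {c : Fin n → ℕ} (hc : ∀ i, 0 < c i ∧ c i < k)
    (hcop : ∀ i : Fin n, (blockLabel k i 0).Coprime (blockLabel k i (c i))) :
    IsSpineLabeling (n * k) (fun i : Fin n ↦ blockLabel k i 0) (fun i ↦ blockLabel k i (c i)) := by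
  have hk (i : Fin n) : 0 < k := (hc i).1.trans (hc i).2
  refine ⟨Injective.sumElim (fun i j h ↦ ?_) (fun i j h ↦ ?_) fun i j h ↦ ?_, ?_, ?_, hcop⟩
  · exact Fin.ext ((blockLabel_inj (hk i) (hk j)).1 h).1
  · exact Fin.ext ((blockLabel_inj (hc i).2 (hc j).2).1 h).1
  · exact (hc j).1.ne ((blockLabel_inj (hk i) (hc j).2).1 h).2
  · rintro (i | i)
    exacts [blockLabel_mem_oddLabels i.2 (hk i), blockLabel_mem_oddLabels i.2 (hc i).2]
  · exact fun i j hij ↦ hij ▸ coprime_blockLabel_zero_succ k i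

theorem isOddPrime_of_blocks (hk : 2 ≤ k) (c : Fin n → ℕ) (hc : ∀ i, 0 < c i ∧ c i < k)
    (hcop : ∀ i : Fin n, ∀ t < k, t ≠ c i → (blockLabel k i (c i)).Coprime (blockLabel k i t)) :
    IsOddPrime (firecracker n k) := by
  have hspine := isSpineLabeling_blocks hc
    fun i ↦ (hcop i 0 (by lia) (hc i).1.ne).symm
  have hskip {i : Fin n} {t : ℕ} (ht : t < k - 2) : skip (c i) t < k :=
    (skip_le_add_two _ _).trans_lt (by lia)
  refine hspine.isOddPrime hk (w := fun a ↦ blockLabel k a.1 (skip (c a.1) a.2))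
    ?_ (fun a ↦ mem_leafLabels.2 ⟨?_, ?_⟩) fun a ↦ ?_
  · rintro ⟨i, s⟩ ⟨j, t⟩ h
    obtain ⟨hij, hst⟩ := (blockLabel_inj (hskip s.2) (hskip t.2)).1 h
    obtain rfl := Fin.ext hij
    exact Prod.ext rfl (Fin.ext (skip_injective _ hst))
  · exact blockLabel_mem_oddLabels a.1.2 (hskip a.2.2)
  · rintro (i | i) h
    · exact (skip_pos _ _).ne ((blockLabel_inj (by lia) (hskip a.2.2)).1 h).2
    · obtain ⟨hi, hci⟩ := (blockLabel_inj (hc i).2 (hskip a.2.2)).1 h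
      exact skip_ne _ _ (by rw [← hci, Fin.ext hi])
  · exact hcop a.1 _ (hskip a.2.2) (skip_ne _ _)

lemma exists_coprime_add_two_mul {P w : ℕ} (hP : 0 < P)
    (h : ∀ r < P, ∃ j < w, (2 * r + 1 + 2 * j).Coprime P) (i : ℕ) :
    ∃ j < w, (2 * i + 1 + 2 * j).Coprime P := by
  obtain ⟨j, hj, hcop⟩ := h (i % P) (i.mod_lt hP)
  refine ⟨j, hj, ?_⟩
  rw [show 2 * i + 1 + 2 * j = 2 * (i % P) + 1 + 2 * j + P * (2 * (i / P)) by
    have := Nat.mod_add_div i P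
    linarith]
  rwa [Nat.coprime_add_mul_left_left]

-- The centre of the `i`-th block is one of `w` consecutive odd numbers, starting at index `s`,
-- that is coprime to `P`: it is then coprime to the rest of its block, its distance to the other
-- labels there being a product of primes that divide `P`.
theorem isOddPrime_of_window {P w s D : ℕ} (hP : 0 < P)
    (hwindow : ∀ r < P, ∃ j < w, (2 * r + 1 + 2 * j).Coprime P)
    (hdiff : ∀ d ∈ Icc 1 D, 2 * d ∣ P ^ 4) (hs : 0 < s) (hsk : s + w ≤ k)
    (hswD : s + w ≤ D + 1) (hkD : k ≤ s + D + 1) :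
    IsOddPrime (firecracker n k) := by
  have hk : 2 ≤ k := by
    obtain ⟨j, hj, -⟩ := hwindow 0 hP
    lia
  choose j hjw hj using fun i : Fin n ↦ exists_coprime_add_two_mul hP hwindow (k * i + s)
  have hcentre (i : Fin n) : (blockLabel k i (s + j i)).Coprime P := by
    convert hj i using 1
    unfold blockLabel
    ring
  refine isOddPrime_of_blocks hk (fun i ↦ s + j i) (fun i ↦ ⟨by lia, ?_⟩) fun i t ht hne ↦ ?_
  · have := hjw i
    lia
  have := hjw i
  refine coprime_of_dist_dvd_pow (e := 4) (hcentre i) ?_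
  convert hdiff (Nat.dist (s + j i) t) (mem_Icc.2 (by unfold Nat.dist; lia)) using 1
  unfold Nat.dist blockLabel
  lia

theorem isOddPrime_of_le_thirteen (hk : 3 ≤ k) (hk' : k ≤ 13) : IsOddPrime (firecracker n k) := by
  rcases Nat.lt_or_ge k 6 with h | h
  · exact isOddPrime_of_window (P := 6) (w := 2) (s := 1) (D := 4) (by decide) (by decide)
      (by decide) (by lia) (by lia) (by lia) (by lia)
  · exact isOddPrime_of_window (P := 210) (w := 5) (s := min 2 (k - 5)) (D := 10) (by decide)
      (by decide +kernel) (by decide +kernel) (by lia) (by lia) (by lia) (by lia)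

section Hall

variable {α β : Type*} {m : ℕ} {B : Finset β} (r : α → β → Prop)
  [∀ a b, Decidable (r a b)]

theorem exists_injective_prod_fin_of_hall
    (h : ∀ A : Finset α, #A * m ≤ #{b ∈ B | ∃ a ∈ A, r a b}) :
    ∃ f : α × Fin m → β, Injective f ∧ ∀ p, f p ∈ B ∧ r p.1 (f p) := by
  classical
  suffices hall : ∀ S : Finset (α × Fin m), #S ≤ #(S.biUnion fun p ↦ {b ∈ B | r p.1 b}) by
    obtain ⟨f, hf, hmem⟩ := (all_card_le_biUnion_card_iff_exists_injective _).1 hall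
    exact ⟨f, hf, fun p ↦ mem_filter.1 (hmem p)⟩
  intro S
  calc #S ≤ #(S.image Prod.fst ×ˢ (univ : Finset (Fin m))) :=
        card_le_card fun p hp ↦ mem_product.2 ⟨mem_image_of_mem _ hp, mem_univ _⟩
    _ = #(S.image Prod.fst) * m := by rw [card_product, card_univ, Fintype.card_fin]
    _ ≤ #{b ∈ B | ∃ a ∈ S.image Prod.fst, r a b} := h _
    _ ≤ #(S.biUnion fun p ↦ {b ∈ B | r p.1 b}) := card_le_card fun b hb ↦ by
        obtain ⟨hbB, a, ha, hab⟩ := mem_filter.1 hb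
        obtain ⟨p, hp, rfl⟩ := mem_image.1 ha
        exact mem_biUnion.2 ⟨p, hp, mem_filter.2 ⟨hbB, hab⟩⟩

lemma card_le_card_filter_degree_le [Fintype α] (A : Finset α) [∀ b, Decidable (∃ a ∈ A, r a b)] :
    #A ≤ #{a | #{b ∈ B | r a b} ≤ #{b ∈ B | ∃ a ∈ A, r a b}} :=
  card_le_card fun a ha ↦ mem_filter.2 ⟨mem_univ a, card_le_card fun _ hb ↦
    mem_filter.2 ⟨(mem_filter.1 hb).1, a, ha, (mem_filter.1 hb).2⟩⟩

lemma card_filter_not_exists_le_card_filter_degree_le [Fintype α] [DecidableEq α] (A : Finset α)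
    [∀ b, Decidable (∃ a ∈ A, r a b)] :
    #{b ∈ B | ¬ ∃ a ∈ A, r a b} ≤ #{b ∈ B | #{a | r a b} ≤ #Aᶜ} :=
  card_le_card fun _ hb ↦ mem_filter.2 ⟨(mem_filter.1 hb).1, card_le_card fun a hab ↦
    mem_compl.2 fun haA ↦ (mem_filter.1 hb).2 ⟨a, haA, (mem_filter.1 hab).2⟩⟩

-- A set `A` violating Hall's condition either sees less than half of `B`, and then all of `A` has
-- low degree, or it sees at least half of `B`, and then all that it misses has low degree.
theorem exists_injective_of_card_low_degree_le [Fintype α] (hB : #B = Fintype.card α * m)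
    (hleft : ∀ x : ℝ, 0 ≤ x → x < 1 / 2 →
      (#{a | (#{b ∈ B | r a b} : ℝ) ≤ x * #B} : ℝ) ≤ x * Fintype.card α)
    (hright : ∀ x : ℝ, 0 ≤ x → x < 1 / 2 →
      (#{b ∈ B | (#{a | r a b} : ℝ) ≤ x * Fintype.card α} : ℝ) ≤ x * #B) :
    ∃ f : α × Fin m → β, Injective f ∧ ∀ p, f p ∈ B ∧ r p.1 (f p) := by
  classical
  refine exists_injective_prod_fin_of_hall r fun A ↦ ?_
  set T := #{b ∈ B | ∃ a ∈ A, r a b}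
  by_contra! hTA
  have hseen := card_le_card_filter_degree_le (B := B) r A
  have hmissed := card_filter_not_exists_le_card_filter_degree_le (B := B) r A
  have hsplit := card_filter_add_card_filter_not (s := B) fun b ↦ ∃ a ∈ A, r a b
  have hcompl := card_add_card_compl A
  have hprod : 0 < #A * m := by lia
  rify at hB hTA hseen hmissed hsplit hcompl
  have hm : (0 : ℝ) < m := by exact_mod_cast pos_of_mul_pos_right hprod (Nat.zero_le _)
  have hA : (0 : ℝ) < #A := by exact_mod_cast pos_of_mul_pos_left hprod (Nat.zero_le _)
  have hn : (0 : ℝ) < Fintype.card α := by linarith [Nat.cast_nonneg (α := ℝ) #Aᶜ]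
  have hB0 : (0 : ℝ) < #B := by rw [hB]; positivity
  refine hTA.not_ge ?_
  rcases lt_or_ge ((T : ℝ) / #B) (1 / 2) with hsmall | hlarge
  · have hlow := hleft _ (by positivity) hsmall
    rw [div_mul_cancel₀ _ hB0.ne'] at hlow
    calc (#A : ℝ) * m ≤ T / #B * Fintype.card α * m := by gcongr; exact hseen.trans hlow
      _ = T := by rw [hB]; field_simp
  · rw [le_div_iff₀ hB0] at hlarge
    have hhalf : (#Aᶜ : ℝ) / Fintype.card α < 1 / 2 := by
      rw [div_lt_iff₀ hn]
      nlinarith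
    have hlow := hright _ (by positivity) hhalf
    rw [div_mul_cancel₀ _ hn.ne'] at hlow
    calc (#A : ℝ) * m = #B - #Aᶜ / Fintype.card α * #B := by
          rw [hB, ← hcompl]; field_simp; ring
      _ ≤ T := by linarith

theorem exists_injective_of_half_le_degree [Fintype α] (hm : 0 < m) (hB : #B = Fintype.card α * m)
    (hleft : ∀ a, #B ≤ 2 * #{b ∈ B | r a b})
    (hright : ∀ b ∈ B, Fintype.card α ≤ 2 * #{a | r a b}) :
    ∃ f : α × Fin m → β, Injective f ∧ ∀ p, f p ∈ B ∧ r p.1 (f p) := by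
  have not_low {d c : ℕ} {x : ℝ} (hx : x < 1 / 2) (hc : 0 < c) (hd : c ≤ 2 * d) :
      ¬ (d : ℝ) ≤ x * c := by
    have hc' : (0 : ℝ) < c := by exact_mod_cast hc
    have hd' : (c : ℝ) ≤ 2 * d := by exact_mod_cast hd
    nlinarith
  refine exists_injective_of_card_low_degree_le r hB (fun x hx0 hx ↦ ?_) fun x hx0 hx ↦ ?_
  · rw [filter_false_of_mem fun a _ ↦ not_low hx ?_ (hleft a), card_empty, Nat.cast_zero]
    · positivity
    · have : Nonempty α := ⟨a⟩
      rw [hB]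
      positivity
  · rw [filter_false_of_mem fun b hb ↦ not_low hx ?_ (hright b hb), card_empty, Nat.cast_zero]
    · positivity
    · exact pos_of_mul_pos_left (hB ▸ card_pos.2 ⟨b, hb⟩) (Nat.zero_le _)

end Hall

lemma card_filter_dvd_le {W : Finset ℕ} {p k : ℕ} (hW : ∀ b ∈ W, 0 < b ∧ b < k * p ∧ b ≠ p) :
    #{b ∈ W | p ∣ b} ≤ k - 2 := by
  have hquot {b} (hb : b ∈ ({b ∈ W | p ∣ b} : Finset ℕ)) : ∃ q ∈ Ioo 1 k, b = q * p := by
    obtain ⟨hbW, q, rfl⟩ := mem_filter.1 hb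
    obtain ⟨hpos, hlt, hne⟩ := hW _ hbW
    have hp : 0 < p := pos_of_mul_pos_left hpos (Nat.zero_le _)
    refine ⟨q, mem_Ioo.2 ⟨?_, ?_⟩, mul_comm _ _⟩
    · refine Nat.one_lt_iff_ne_zero_and_ne_one.2 ⟨?_, ?_⟩ <;> rintro rfl <;> simp at hpos hne
    · exact lt_of_mul_lt_mul_left (by rwa [mul_comm k] at hlt) hp.le
  calc #{b ∈ W | p ∣ b} ≤ #((Ioo 1 k).image (· * p)) := card_le_card fun b hb ↦ by
        obtain ⟨q, hq, rfl⟩ := hquot hb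
        exact mem_image_of_mem _ hq
    _ ≤ k - 2 := by
        rw [show k - 2 = #(Ioo 1 k) by rw [Nat.card_Ioo]; lia]
        exact card_image_le

lemma card_filter_dvd_le_one {b : ℕ} (hb : 0 < b) (hprime : ∀ i, (u i).Prime) (hu : Injective u)
    (hmul : ∀ i j, i ≠ j → b < u i * u j) : #{i | u i ∣ b} ≤ 1 := by
  refine card_le_one.2 fun i hi j hj ↦ by_contra fun hij ↦ (hmul i j hij).not_ge ?_
  have hcop := (Nat.coprime_primes (hprime i) (hprime j)).2 (hu.ne hij)
  exact Nat.le_of_dvd hb (hcop.mul_dvd_of_dvd_of_dvd (mem_filter.1 hi).2 (mem_filter.1 hj).2)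

lemma isSpineLabeling_of_prime (hnN : n ≤ N) (hu : Injective u) (hprime : ∀ i, (u i).Prime)
    (hlower : ∀ i, 2 * n < u i) (hupper : ∀ i, u i < 2 * N) :
    IsSpineLabeling N (fun i : Fin n ↦ 2 * i + 1) u := by
  refine ⟨Injective.sumElim (fun i j h ↦ by lia) hu fun i j ↦ ?_, ?_, fun i j hij ↦ ?_, fun i ↦ ?_⟩
  · have := hlower j
    lia
  · rintro (i | i)
    · exact two_mul_add_one_mem_oddLabels (by lia)
    · have := hlower i
      have := i.pos
      exact mem_oddLabels.2 ⟨hupper i, (hprime i).odd_of_ne_two (by lia)⟩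
  · rw [hij, mul_add_one, add_right_comm, Nat.coprime_self_add_right, Nat.coprime_two_right]
    exact odd_two_mul_add_one _
  · have := hlower i
    exact (Nat.coprime_of_lt_prime (by lia) (by lia) (hprime i)).symm

theorem isOddPrime_of_prime_centres (hn : 2 ≤ n) (hk : 3 ≤ k) (hu : Injective u)
    (hprime : ∀ i, (u i).Prime) (hlower : ∀ i, 2 * n < u i) (hupper : ∀ i, u i < 2 * (n * k))
    (hmul : ∀ i j, i ≠ j → 2 * (n * k) ≤ u i * u j) : IsOddPrime (firecracker n k) := by
  have hspine := isSpineLabeling_of_prime (Nat.le_mul_of_pos_right n (by lia)) hu hprime hlower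
    hupper
  set W := leafLabels (n * k) (fun i : Fin n ↦ 2 * (i : ℕ) + 1) u
  have hWcard : #W = n * (k - 2) := hspine.card_leafLabels
  have hW {b} (hb : b ∈ W) : 0 < b ∧ b < 2 * (n * k) ∧ ∀ i, b ≠ u i := by
    obtain ⟨hb, hne⟩ := mem_leafLabels.1 hb
    obtain ⟨hlt, hodd⟩ := mem_oddLabels.1 hb
    exact ⟨hodd.pos, hlt, fun i ↦ (hne (.inr i)).symm⟩
  have hcentre (i : Fin n) : #W ≤ 2 * #{b ∈ W | ¬ u i ∣ b} := by
    have hmult : #{b ∈ W | u i ∣ b} ≤ k - 2 := by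
      refine card_filter_dvd_le fun b hb ↦ ⟨(hW hb).1, (hW hb).2.1.trans_le ?_, (hW hb).2.2 i⟩
      calc 2 * (n * k) = k * (2 * n) := by ring
        _ ≤ k * u i := by gcongr; exact (hlower i).le
    have hsplit := card_filter_add_card_filter_not (s := W) (u i ∣ ·)
    have : 2 * (k - 2) ≤ n * (k - 2) := by gcongr
    rw [hWcard] at hsplit ⊢
    lia
  have hleaf (b) (hb : b ∈ W) : Fintype.card (Fin n) ≤ 2 * #{i | ¬ u i ∣ b} := by
    have hdvd := card_filter_dvd_le_one (hW hb).1 hprime hu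
      fun i j hij ↦ (hW hb).2.1.trans_le (hmul i j hij)
    have hsplit := card_filter_add_card_filter_not (s := (univ : Finset (Fin n))) (u · ∣ b)
    rw [card_univ, Fintype.card_fin] at hsplit
    rw [Fintype.card_fin]
    lia
  obtain ⟨w, hw, hwmem⟩ := exists_injective_of_half_le_degree (fun i b ↦ ¬ u i ∣ b)
    (Nat.sub_pos_of_lt hk) (by rw [hWcard, Fintype.card_fin]) hcentre hleaf
  exact hspine.isOddPrime (by lia) hw (fun p ↦ (hwmem p).1)
    fun p ↦ (hprime p.1).coprime_iff_not_dvd.2 (hwmem p).2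

lemma le_mul_primeCounting_add_one {x a : ℕ} (hx : x < 2 ^ a) : x ≤ a * (π x + 1) := by
  rcases Nat.lt_or_ge 1 x with h1 | h1
  swap
  · rcases Nat.eq_zero_or_pos a with rfl | ha
    · simpa [Nat.lt_one_iff] using hx
    · exact h1.trans (Nat.mul_pos ha (Nat.succ_pos _))
  have hlog {y : ℝ} (hy0 : 0 < y) (hy : y ≤ 2 ^ a) : Real.log y ≤ a * Real.log 2 := by
    rw [← Real.log_pow]
    exact Real.log_le_log hy0 hy
  have hlogx : Real.log x ≤ a * Real.log 2 := hlog (by positivity) (by exact_mod_cast hx.le)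
  have hlogx1 : Real.log (x + 1) ≤ a * Real.log 2 := hlog (by positivity) (by exact_mod_cast hx)
  have hpi := Chebyshev.pi_ge x
  rw [div_le_iff₀ (Real.log_pos (by exact_mod_cast h1))] at hpi
  have key : (x : ℝ) * Real.log 2 ≤ a * (π x + 1) * Real.log 2 := calc
    (x : ℝ) * Real.log 2 ≤ π x * Real.log x + Real.log (x + 1) := by linarith
    _ ≤ π x * (a * Real.log 2) + a * Real.log 2 := by gcongr
    _ = a * (π x + 1) * Real.log 2 := by ring
  exact_mod_cast le_of_mul_le_mul_right key (Real.log_pos one_lt_two)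

lemma three_mul_primeCounting_le {M : ℕ} (hM : 6 ≤ M) : 3 * π M ≤ M + 9 := by
  have h := Nat.primeCounting_add_le (a := 6) (by decide) le_rfl (M - 6)
  rw [Nat.add_sub_cancel' hM, show π 6 = 3 by decide, show Nat.totient 6 = 2 by decide] at h
  lia

lemma add_primeCounting_le {n M x a : ℕ} (hx : x < 2 ^ a) (hM : 6 ≤ M)
    (h : a * (3 * n + M + 9) < 3 * x) : n + π M ≤ π x := by
  have hM' := three_mul_primeCounting_le hM
  have hlt : a * (3 * n + M + 9) < a * (3 * (π x + 1)) := by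
    linarith [le_mul_primeCounting_add_one hx]
  have := lt_of_mul_lt_mul_left hlt (Nat.zero_le a)
  lia

lemma mul_sq_le_two_pow {a : ℕ} (ha : 16 ≤ a) : 144 * (a + 1) ^ 2 ≤ 2 ^ a := by
  induction a, ha using Nat.le_induction with
  | base => norm_num
  | succ a ha ih =>
    rw [pow_succ 2]
    nlinarith

-- The condition `2 * n ≤ M` is met by `M ≈ N / 7` and by `M ≈ √(360 N)`; only the second leaves
-- enough primes when `N` is large, and only the first when it is small.
lemma exists_add_primeCounting_le {n N : ℕ} (hN : 28 ≤ N) (hn : 14 * n ≤ N)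
    (hn' : n ^ 2 ≤ 90 * N) :
    ∃ M, 2 * n ≤ M ∧ 2 * N < (M + 1) ^ 2 ∧ n + π M ≤ π (2 * N) := by
  obtain ⟨a, hlow, hupp⟩ : ∃ a, 2 ^ a ≤ 2 * N ∧ 2 * N < 2 ^ (a + 1) :=
    ⟨Nat.log 2 (2 * N), Nat.pow_log_le_self 2 (by lia), Nat.lt_pow_succ_log_self one_lt_two _⟩
  rcases Nat.lt_or_ge a 16 with ha | ha
  · refine ⟨(2 * N + 49) / 14, by lia, ?_, add_primeCounting_le hupp (by lia) ?_⟩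
    · have : 2 * N + 49 < 14 * ((2 * N + 49) / 14 + 1) := by lia
      nlinarith [sq_nonneg ((2 * N + 49) / 14 - 6 : ℤ)]
    · interval_cases a <;> lia
  · set M := Nat.sqrt (180 * (2 * N))
    have hM : M ^ 2 ≤ 180 * (2 * N) := Nat.sqrt_le' _
    have hM' : 180 * (2 * N) < (M + 1) ^ 2 := Nat.lt_succ_sqrt' _
    have hnM : 2 * n ≤ M := Nat.le_sqrt'.2 (by linarith)
    have ha2 : 144 * (a + 1) ^ 2 ≤ 2 * N := (mul_sq_le_two_pow ha).trans hlow
    have haM : 1000 * ((a + 1) * M) ≤ 1120 * (2 * N) := by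
      refine (Nat.pow_le_pow_iff_left two_ne_zero).1 ?_
      calc (1000 * ((a + 1) * M)) ^ 2 = 1000 ^ 2 * ((a + 1) ^ 2 * M ^ 2) := by ring
        _ ≤ 1000 ^ 2 * ((a + 1) ^ 2 * (180 * (2 * N))) := by gcongr
        _ = 1250000 * (144 * (a + 1) ^ 2 * (2 * N)) := by ring
        _ ≤ 1250000 * (2 * N * (2 * N)) := by gcongr
        _ ≤ (1120 * (2 * N)) ^ 2 := by nlinarith
    refine ⟨M, hnM, by lia, add_primeCounting_le hupp (by nlinarith) ?_⟩
    nlinarith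

theorem isOddPrime_of_le_ninety_mul (hn : 2 ≤ n) (hk : 14 ≤ k) (hnk : n ≤ 90 * k) :
    IsOddPrime (firecracker n k) := by
  obtain ⟨M, hnM, hM, hπ⟩ := exists_add_primeCounting_le (n := n) (N := n * k) (by nlinarith)
    (by nlinarith) (by nlinarith)
  set Q := Nat.primesLE (2 * (n * k)) \ Nat.primesLE M
  have hQ : n ≤ #Q := by
    have := le_card_sdiff (Nat.primesLE M) (Nat.primesLE (2 * (n * k)))
    simp only [Nat.primesLE_card_eq_primeCounting] at this
    lia
  have hu (i : Fin n) : (Q.orderEmbOfCardLe hQ i).Prime ∧ M + 1 ≤ Q.orderEmbOfCardLe hQ i ∧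
      Q.orderEmbOfCardLe hQ i < 2 * (n * k) := by
    obtain ⟨hle, hprime, hM⟩ : _ ≤ 2 * (n * k) ∧ _ ∧ _ := by
      simpa only [Q, mem_sdiff, Nat.mem_primesLE, not_and', and_assoc]
        using Q.orderEmbOfCardLe_mem hQ i
    refine ⟨hprime, not_le.1 (hM hprime), hle.lt_of_ne fun h ↦ ?_⟩
    exact Nat.not_prime_mul (by decide) (by nlinarith) (h ▸ hprime)
  refine isOddPrime_of_prime_centres hn (by lia) (Q.orderEmbOfCardLe hQ).injective
    (fun i ↦ (hu i).1) (fun i ↦ hnM.trans_lt (hu i).2.1) (fun i ↦ (hu i).2.2) fun i j _ ↦ ?_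
  rw [sq] at hM
  exact hM.le.trans (Nat.mul_le_mul (hu i).2.1 (hu j).2.1)

lemma prod_dvd_iff_of_prime {t : Finset ℕ} (ht : ∀ p ∈ t, p.Prime) (y : ℕ) :
    ∏ p ∈ t, p ∣ y ↔ ∀ p ∈ t, p ∣ y :=
  ⟨fun h _ hp ↦ (dvd_prod_of_mem _ hp).trans h,
    prod_primes_dvd y fun p hp ↦ (ht p hp).prime⟩

lemma sum_prod_one_add_ite_dvd {ι : Type*} (I : Finset ι) (f : ι → ℕ) {P : Finset ℕ}
    (hP : ∀ p ∈ P, p.Prime) (g : ℕ → ℝ) :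
    ∑ i ∈ I, ∏ p ∈ P, (1 + if p ∣ f i then g p else 0) =
      ∑ t ∈ P.powerset, (∏ p ∈ t, g p) * #{i ∈ I | ∏ p ∈ t, p ∣ f i} := by
  simp_rw [prod_one_add]
  rw [sum_comm]
  refine sum_congr rfl fun t ht ↦ ?_
  have ht' : ∀ p ∈ t, p.Prime := fun p hp ↦ hP p (mem_powerset.1 ht hp)
  simp_rw [prod_ite_zero, ← prod_dvd_iff_of_prime ht', ← sum_filter, sum_const, nsmul_eq_mul,
    mul_comm]

lemma exists_dvd_add_mul {D d : ℕ} (hd : 0 < d) (hD : D.Coprime d) (a : ℕ) :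
    ∃ j, ∀ i, d ∣ a + D * i ↔ i ≡ j [MOD d] := by
  have : NeZero d := ⟨hd.ne'⟩
  obtain ⟨U, hU⟩ := (ZMod.isUnit_iff_coprime D d).2 hD
  refine ⟨(-(U⁻¹ * a : ZMod d)).val, fun i ↦ ?_⟩
  rw [← ZMod.natCast_eq_zero_iff, ← ZMod.natCast_eq_natCast_iff, ZMod.natCast_zmod_val]
  push_cast
  rw [← hU, add_comm, add_eq_zero_iff_eq_neg, ← Units.eq_inv_mul_iff_mul_eq, mul_neg]

lemma abs_card_dvd_add_mul_sub_le {D d : ℕ} (hd : 0 < d) (hD : D.Coprime d) (a m : ℕ) :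
    |(#{i ∈ range m | d ∣ a + D * i} : ℝ) - m / d| ≤ 1 := by
  obtain ⟨j, hj⟩ := exists_dvd_add_mul hd hD a
  simp_rw [hj, ← Nat.count_eq_card_filter_range, Nat.count_modEq_card m hd]
  have hd' : (0 : ℝ) < d := by exact_mod_cast hd
  have hdivmod : (m : ℝ) / d = (m / d : ℕ) + (m % d : ℕ) / d := by
    field_simp
    exact_mod_cast (Nat.div_add_mod m d).symm
  have hmod : ((m % d : ℕ) : ℝ) / d ≤ 1 := by
    rw [div_le_one hd']
    exact_mod_cast (Nat.mod_lt m hd).le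
  have hmod0 : (0 : ℝ) ≤ (m % d : ℕ) / d := by positivity
  rw [hdivmod, abs_le]
  split_ifs <;> push_cast <;> constructor <;> linarith

-- The Eratosthenes–Legendre sieve: expand `∏ p ∈ R, (1 - 1_{p ∣ y})` over the subsets of `R`.
theorem abs_card_forall_not_dvd_sub_le {R : Finset ℕ} (hR : ∀ p ∈ R, p.Prime) {D : ℕ}
    (hD : ∀ p ∈ R, ¬ p ∣ D) (a m : ℕ) :
    |(#{i ∈ range m | ∀ p ∈ R, ¬ p ∣ a + D * i} : ℝ) - m * ∏ p ∈ R, (1 - 1 / (p : ℝ))| ≤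
      2 ^ #R := by
  have hcount : (#{i ∈ range m | ∀ p ∈ R, ¬ p ∣ a + D * i} : ℝ) =
      ∑ t ∈ R.powerset, (∏ p ∈ t, (-1 : ℝ)) * #{i ∈ range m | ∏ p ∈ t, p ∣ a + D * i} := by
    rw [← sum_prod_one_add_ite_dvd _ _ hR, ← sum_boole]
    refine sum_congr rfl fun i _ ↦ ?_
    rw [← prod_boole]
    refine prod_congr rfl fun p _ ↦ ?_
    split_ifs <;> norm_num
  have hmain : m * ∏ p ∈ R, (1 - 1 / (p : ℝ)) =
      ∑ t ∈ R.powerset, (∏ p ∈ t, (-1 : ℝ)) * (m / (∏ p ∈ t, p : ℕ)) := by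
    simp_rw [sub_eq_add_neg, prod_one_add, mul_sum]
    refine sum_congr rfl fun t _ ↦ ?_
    rw [Nat.cast_prod, prod_neg, prod_const, prod_div_distrib, prod_const_one]
    ring
  rw [hcount, hmain, ← sum_sub_distrib]
  calc _ ≤ ∑ _t ∈ R.powerset, (1 : ℝ) := (abs_sum_le_sum_abs _ _).trans <| sum_le_sum fun t ht ↦ ?_
    _ = 2 ^ #R := by rw [sum_const, card_powerset, nsmul_one, Nat.cast_pow, Nat.cast_two]
  rw [← mul_sub, abs_mul, prod_const, abs_neg_one_pow, one_mul]
  have ht' : ∀ p ∈ t, p ∈ R := fun p hp ↦ mem_powerset.1 ht hp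
  exact abs_card_dvd_add_mul_sub_le (prod_pos fun p hp ↦ (hR p (ht' p hp)).pos)
    (Nat.Coprime.prod_right fun p hp ↦
      ((hR p (ht' p hp)).coprime_iff_not_dvd.2 (hD p (ht' p hp))).symm) a m

lemma sum_Ioc_prod_one_add_ite_dvd_le {P : Finset ℕ} (hP : ∀ p ∈ P, p.Prime) {g : ℕ → ℝ}
    (hg : ∀ p ∈ P, 0 ≤ g p) (M : ℕ) :
    ∑ y ∈ Ioc 0 M, ∏ p ∈ P, (1 + if p ∣ y then g p else 0) ≤ M * ∏ p ∈ P, (1 + g p / p) := by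
  rw [sum_prod_one_add_ite_dvd _ (fun y ↦ y) hP, prod_one_add, mul_sum]
  refine sum_le_sum fun t ht ↦ ?_
  have hcard : (#{y ∈ Ioc 0 M | ∏ p ∈ t, p ∣ y} : ℝ) ≤ M / ∏ p ∈ t, (p : ℝ) := by
    rw [← Nat.cast_prod, Nat.Ioc_filter_dvd_card_eq_div]
    exact Nat.cast_div_le
  calc _ ≤ (∏ p ∈ t, g p) * (M / ∏ p ∈ t, (p : ℝ)) := by
        gcongr
        exact prod_nonneg fun p hp ↦ hg p (mem_powerset.1 ht hp)
    _ = M * ∏ p ∈ t, g p / p := by rw [prod_div_distrib]; ring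

/-- The primes `p ≥ 5` dividing `x`: they decide whether `x` is coprime to a number `6 * i + 1`. -/
def largePrimeFactors (x : ℕ) : Finset ℕ := {p ∈ x.primeFactors | 5 ≤ p}

/-- The density of the integers divisible by none of the primes `p ≥ 5` dividing `x`. -/
noncomputable def density (x : ℕ) : ℝ := ∏ p ∈ largePrimeFactors x, (1 - 1 / (p : ℝ))

/-- The weight at `p` for which the product of `1 + weight p` over the primes `p ≥ 5` dividing `x`
is the moment `(density x)⁻¹ ^ 8`. -/
noncomputable def weight (p : ℕ) : ℝ := (1 - 1 / (p : ℝ))⁻¹ ^ 8 - 1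

lemma mem_largePrimeFactors {p x : ℕ} (hx : x ≠ 0) :
    p ∈ largePrimeFactors x ↔ p.Prime ∧ p ∣ x ∧ 5 ≤ p := by
  rw [largePrimeFactors, mem_filter, Nat.mem_primeFactors_of_ne_zero hx, and_assoc]

lemma prime_of_mem_largePrimeFactors {p x : ℕ} (h : p ∈ largePrimeFactors x) : p.Prime :=
  Nat.prime_of_mem_primeFactors (mem_filter.1 h).1

lemma five_le_of_mem_largePrimeFactors {p x : ℕ} (h : p ∈ largePrimeFactors x) : 5 ≤ p :=
  (mem_filter.1 h).2

lemma one_div_le_of_five_le {p : ℕ} (hp : 5 ≤ p) : 1 / (p : ℝ) ≤ 1 / 5 :=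
  one_div_le_one_div_of_le (by norm_num) (by exact_mod_cast hp)

lemma density_pos (x : ℕ) : 0 < density x := prod_pos fun p hp ↦ by
  linarith [one_div_le_of_five_le (five_le_of_mem_largePrimeFactors hp)]

lemma weight_nonneg {p : ℕ} (hp : 5 ≤ p) : 0 ≤ weight p := by
  have h := one_div_le_of_five_le hp
  have h0 : (0 : ℝ) ≤ 1 / p := by positivity
  exact sub_nonneg.2 <| one_le_pow₀ <| (one_le_inv₀ (by linarith)).2 (by linarith)

lemma weight_div_le {p : ℕ} (hp : 41 ≤ p) : weight p / p ≤ 10 * ((p : ℝ) ^ 2)⁻¹ := by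
  have hinv : 1 / (p : ℝ) ≤ 1 / 41 :=
    one_div_le_one_div_of_le (by norm_num) (by exact_mod_cast hp)
  have hinv0 : (0 : ℝ) ≤ 1 / p := by positivity
  have bernoulli := one_add_mul_le_pow (a := -(1 / (p : ℝ))) (by linarith) 8
  push_cast at bernoulli
  have key : weight p ≤ 10 * (1 / p) := by
    rw [weight, inv_pow, sub_le_iff_le_add, inv_le_iff_one_le_mul₀ (pow_pos (by linarith) 8),
      sub_eq_add_neg]
    nlinarith
  calc weight p / p ≤ 10 * (1 / p) / p := by gcongr
    _ = 10 * ((p : ℝ) ^ 2)⁻¹ := by field_simp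

lemma prod_one_add_weight_div_le_of_lt {P : Finset ℕ} (hP : ∀ p ∈ P, p.Prime ∧ 5 ≤ p)
    (hlt : ∀ p ∈ P, p < 41) : ∏ p ∈ P, (1 + weight p / p) ≤ 3.5415 := by
  have hsub : P ⊆ {5, 7, 11, 13, 17, 19, 23, 29, 31, 37} := fun p hp ↦ by
    have hp41 := hlt p hp
    obtain ⟨hprime, hp5⟩ := hP p hp
    clear hP hlt hp
    decide +revert
  calc ∏ p ∈ P, (1 + weight p / p)
      ≤ ∏ p ∈ {5, 7, 11, 13, 17, 19, 23, 29, 31, 37}, (1 + weight p / p) := by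
        refine prod_le_prod_of_subset_of_one_le hsub (fun p hp ↦ ?_) fun p hp _ ↦ ?_
        · have := weight_nonneg (hP p hp).2
          positivity
        · have hp5 : 5 ≤ p := by
            simp only [mem_insert, mem_singleton] at hp
            lia
          have := weight_nonneg hp5
          exact le_add_of_nonneg_right (by positivity)
    _ ≤ 3.5415 := by norm_num [weight]

lemma prod_one_add_weight_div_le_of_ge {P : Finset ℕ} (hP : ∀ p ∈ P, 41 ≤ p) :
    ∏ p ∈ P, (1 + weight p / p) ≤ 1.285 := by
  have hsum : ∑ p ∈ P, ((p : ℝ) ^ 2)⁻¹ ≤ 1 / 40 := by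
    have htelescope := sum_Ioc_inv_sq_le_sub (α := ℝ) (k := 40) (n := P.sup id + 40)
      (by norm_num) (by lia)
    refine (sum_le_sum_of_subset_of_nonneg (fun p hp ↦ mem_Ioc.2 ⟨hP p hp, ?_⟩)
      fun _ _ _ ↦ by positivity).trans (htelescope.trans ?_)
    · exact (le_sup (f := id) hp).trans (Nat.le_add_right _ _)
    · have : (0 : ℝ) ≤ ((P.sup id + 40 : ℕ) : ℝ)⁻¹ := by positivity
      norm_num at this ⊢
      linarith
  calc ∏ p ∈ P, (1 + weight p / p)
      ≤ ∏ p ∈ P, Real.exp (10 * ((p : ℝ) ^ 2)⁻¹) := by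
        refine prod_le_prod (fun p hp ↦ ?_) fun p hp ↦ ?_
        · have := weight_nonneg (p := p) (by linarith [hP p hp])
          positivity
        · linarith [weight_div_le (hP p hp), Real.add_one_le_exp (10 * ((p : ℝ) ^ 2)⁻¹)]
    _ = Real.exp (10 * ∑ p ∈ P, ((p : ℝ) ^ 2)⁻¹) := by rw [← Real.exp_sum, mul_sum]
    _ ≤ Real.exp (1 / 4) := Real.exp_le_exp.2 (by linarith)
    _ ≤ 1.285 := by
        refine le_of_pow_le_pow_left₀ four_ne_zero (by norm_num) ?_
        rw [← Real.exp_nat_mul]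
        norm_num
        linarith [Real.exp_one_lt_d9]

lemma prod_one_add_weight_div_le {P : Finset ℕ} (hP : ∀ p ∈ P, p.Prime ∧ 5 ≤ p) :
    ∏ p ∈ P, (1 + weight p / p) ≤ 55 / 12 := by
  rw [← prod_filter_mul_prod_filter_not P (· < 41)]
  calc _ ≤ (3.5415 : ℝ) * 1.285 := by
        refine mul_le_mul (prod_one_add_weight_div_le_of_lt (fun p hp ↦ hP p (mem_filter.1 hp).1)
          fun p hp ↦ (mem_filter.1 hp).2) (prod_one_add_weight_div_le_of_ge fun p hp ↦
          not_lt.1 (mem_filter.1 hp).2) (prod_nonneg fun p hp ↦ ?_) (by norm_num)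
        have := weight_nonneg (hP p (mem_filter.1 hp).1).2
        positivity
    _ ≤ 55 / 12 := by norm_num

theorem sum_inv_density_pow_le (M : ℕ) :
    ∑ y ∈ Ioc 0 M, (density y)⁻¹ ^ 8 ≤ M * (55 / 12) := by
  set P : Finset ℕ := {p ∈ range (M + 1) | p.Prime ∧ 5 ≤ p}
  have hP : ∀ p ∈ P, p.Prime ∧ 5 ≤ p := fun p hp ↦ (mem_filter.1 hp).2
  have hmoment : ∀ y ∈ Ioc 0 M,
      (density y)⁻¹ ^ 8 = ∏ p ∈ P, (1 + if p ∣ y then weight p else 0) := by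
    intro y hy
    obtain ⟨hy0, hyM⟩ := mem_Ioc.1 hy
    have hfactors : largePrimeFactors y = {p ∈ P | p ∣ y} := by
      ext p
      rw [mem_largePrimeFactors hy0.ne', mem_filter, mem_filter, mem_range]
      have : p ∣ y → p ≤ y := Nat.le_of_dvd hy0
      grind
    rw [density, hfactors, ← prod_inv_distrib, ← prod_pow, prod_filter]
    refine prod_congr rfl fun p _ ↦ ?_
    split_ifs <;> simp only [weight, add_sub_cancel, add_zero]
  rw [sum_congr rfl hmoment]
  exact (sum_Ioc_prod_one_add_ite_dvd_le (fun p hp ↦ (hP p hp).1)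
    (fun p hp ↦ weight_nonneg (hP p hp).2) M).trans
    (mul_le_mul_of_nonneg_left (prod_one_add_weight_div_le hP) M.cast_nonneg)

lemma card_le_of_density_le {M : ℕ} {Y : Finset ℕ} (hY : Y ⊆ Ioc 0 M) {C x : ℝ}
    (hM : M ≤ 6 * C) (hx0 : 0 ≤ x) (hx : x < 1 / 2) (h : ∀ y ∈ Y, density y ≤ 6 / 5 * x) :
    (#Y : ℝ) ≤ x * C := by
  have markov : (#Y : ℝ) ≤ (6 / 5 * x) ^ 8 * (M * (55 / 12)) := by
    calc (#Y : ℝ) = ∑ y ∈ Y, 1 := by rw [sum_const, nsmul_one]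
      _ ≤ ∑ y ∈ Y, (6 / 5 * x) ^ 8 * (density y)⁻¹ ^ 8 := by
          refine sum_le_sum fun y hy ↦ ?_
          rw [← mul_pow, ← div_eq_mul_inv]
          exact one_le_pow₀ ((one_le_div (density_pos y)).2 (h y hy))
      _ ≤ ∑ y ∈ Ioc 0 M, (6 / 5 * x) ^ 8 * (density y)⁻¹ ^ 8 :=
          sum_le_sum_of_subset_of_nonneg hY fun y _ _ ↦ by
            have := density_pos y
            positivity
      _ ≤ (6 / 5 * x) ^ 8 * (M * (55 / 12)) := by
          rw [← mul_sum]
          gcongr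
          exact sum_inv_density_pow_le M
  have hC : 0 ≤ C := by linarith [(M.cast_nonneg : (0 : ℝ) ≤ M)]
  have hx7 : x ^ 7 ≤ (1 / 2) ^ 7 := pow_le_pow_left₀ hx0 hx.le 7
  calc (#Y : ℝ) ≤ (6 / 5 * x) ^ 8 * (6 * C * (55 / 12)) := markov.trans (by gcongr)
    _ = x * C * (55 / 2 * (6 / 5) ^ 8 * x ^ 7) := by ring
    _ ≤ x * C := mul_le_of_le_one_right (by positivity) (by norm_num at hx7 ⊢; linarith)

-- Each prime `p ≠ 5` contributes at least `4` to the right-hand side, and `p = 5` only `16 / 5`.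
lemma four_pow_card_largePrimeFactors_le {x : ℕ} (hx : x ≠ 0) :
    (4 : ℝ) ^ #(largePrimeFactors x) ≤ 5 / 4 * (x * density x ^ 2) := by
  have hfactor : ∀ p ∈ largePrimeFactors x,
      (4 : ℝ) ≤ (if p = 5 then 5 / 4 else 1) * (p * (1 - 1 / (p : ℝ)) ^ 2) := by
    intro p hp
    split_ifs with h5
    · norm_num [h5]
    · have hp6 : (6 : ℝ) ≤ p := by
        exact_mod_cast (five_le_of_mem_largePrimeFactors hp).lt_of_ne' h5
      have hinv : (0 : ℝ) ≤ 1 / p := by positivity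
      calc (4 : ℝ) ≤ p - 2 + 1 / p := by linarith
        _ = 1 * (p * (1 - 1 / (p : ℝ)) ^ 2) := by field_simp; ring
  have hprod : (∏ p ∈ largePrimeFactors x, (p : ℝ)) ≤ x := by
    rw [← Nat.cast_prod, Nat.cast_le]
    exact Nat.le_of_dvd (Nat.pos_of_ne_zero hx) <|
      (prod_dvd_prod_of_subset _ _ _ (filter_subset _ _)).trans (Nat.prod_primeFactors_dvd x)
  have hfive : ∏ p ∈ largePrimeFactors x, (if p = 5 then 5 / 4 else 1 : ℝ) ≤ 5 / 4 := by
    rw [prod_ite_eq']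
    split_ifs <;> norm_num
  calc (4 : ℝ) ^ #(largePrimeFactors x) = ∏ p ∈ largePrimeFactors x, 4 := (prod_const 4).symm
    _ ≤ ∏ p ∈ largePrimeFactors x, (if p = 5 then 5 / 4 else 1) * (p * (1 - 1 / (p : ℝ)) ^ 2) :=
        prod_le_prod (fun _ _ ↦ by norm_num) hfactor
    _ = (∏ p ∈ largePrimeFactors x, (if p = 5 then 5 / 4 else 1)) *
          ((∏ p ∈ largePrimeFactors x, (p : ℝ)) * density x ^ 2) := by
        rw [prod_mul_distrib, prod_mul_distrib, prod_pow, density]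
    _ ≤ 5 / 4 * (x * density x ^ 2) := by gcongr

lemma six_mul_two_pow_le {n x : ℕ} (hx : x ≠ 0) (hxn : 45 * x ≤ n ^ 2) :
    6 * 2 ^ #(largePrimeFactors x) ≤ n * density x := by
  have hdensity := density_pos x
  have hxn' : (45 : ℝ) * x ≤ n ^ 2 := by exact_mod_cast hxn
  refine le_of_sq_le_sq ?_ (by positivity)
  calc (6 * 2 ^ #(largePrimeFactors x) : ℝ) ^ 2 = 36 * 4 ^ #(largePrimeFactors x) := by
        rw [mul_pow, ← pow_mul, mul_comm _ 2, pow_mul]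
        norm_num
    _ ≤ 45 * x * density x ^ 2 := by linarith [four_pow_card_largePrimeFactors_le hx]
    _ ≤ (n * density x) ^ 2 := by
        rw [mul_pow]
        gcongr

lemma coprime_iff_forall_largePrimeFactors {x y : ℕ} (hx : x ≠ 0) (h6 : (x.gcd y).Coprime 6) :
    x.Coprime y ↔ ∀ p ∈ largePrimeFactors x, ¬ p ∣ y := by
  refine ⟨fun h p hp hpy ↦ ?_, fun h ↦ Nat.coprime_of_dvd fun p hp hpx hpy ↦ ?_⟩
  · obtain ⟨hprime, hpx, -⟩ := (mem_largePrimeFactors hx).1 hp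
    exact Nat.not_coprime_of_dvd_of_dvd hprime.one_lt hpx hpy h
  · refine h p ((mem_largePrimeFactors hx).2 ⟨hp, hpx, ?_⟩) hpy
    by_contra! hp5
    have hp6 : ¬ p ∣ 6 := hp.coprime_iff_not_dvd.1 (h6.coprime_dvd_left (Nat.dvd_gcd hpx hpy))
    interval_cases p <;> revert hp hp6 <;> decide

lemma one_add_six_mul_coprime_six (i : ℕ) : (1 + 6 * i).Coprime 6 :=
  (Nat.coprime_add_mul_left_left 1 6 i).2 (Nat.coprime_one_left 6)

lemma le_card_range_forall_not_dvd {D : ℕ} (hD : D ∣ 6) (x a m : ℕ) :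
    m * density x - 2 ^ #(largePrimeFactors x) ≤
      #{i ∈ range m | ∀ p ∈ largePrimeFactors x, ¬ p ∣ a + D * i} := by
  have hpD : ∀ p ∈ largePrimeFactors x, ¬ p ∣ D := fun p hp hpD ↦ by
    have hprime := prime_of_mem_largePrimeFactors hp
    have hp5 := five_le_of_mem_largePrimeFactors hp
    have hp6 := Nat.le_of_dvd (by norm_num) (hpD.trans hD)
    have hdvd := hpD.trans hD
    clear hp
    interval_cases p <;> revert hprime hdvd <;> decide
  have hsieve := abs_card_forall_not_dvd_sub_le (fun p ↦ prime_of_mem_largePrimeFactors) hpD a m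
  rw [density]
  linarith [(abs_le.1 hsieve).1]

lemma isSpineLabeling_progressions (n : ℕ) {k : ℕ} (hk : 3 ≤ k) :
    IsSpineLabeling (n * k) (fun i : Fin n ↦ 5 + 6 * i.val) (fun i : Fin n ↦ 1 + 6 * i.val) where
  injective := Sum.elim_injective.2
    ⟨fun i j h ↦ Fin.ext (by lia), fun i j h ↦ Fin.ext (by lia), fun i j ↦ by lia⟩
  mem_oddLabels x := by
    have hnk : n * 3 ≤ n * k := Nat.mul_le_mul_left n hk
    rcases x with i | i <;> rw [mem_oddLabels]
    · exact ⟨by simp only [Sum.elim_inl]; lia, 2 + 3 * i.val, by simp only [Sum.elim_inl]; ring⟩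
    · exact ⟨by simp only [Sum.elim_inr]; lia, 3 * i.val, by simp only [Sum.elim_inr]; ring⟩
  path_coprime i j hij := by
    rw [hij, show 5 + 6 * (i.val + 1) = 6 + (5 + 6 * i.val) by ring,
      Nat.coprime_add_self_right, Nat.coprime_add_mul_left_left]
    norm_num
  centre_coprime i := by
    rw [show 5 + 6 * i.val = 4 + (1 + 6 * i.val) by ring, Nat.coprime_add_self_left]
    exact (one_add_six_mul_coprime_six i.val).symm.pow_left 2 |>.coprime_dvd_left (by norm_num)

/-- The leaf labels when the centres get the labels `1 + 6 * i` and the path the labels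
`5 + 6 * i`; below `6 * n` only the odd multiples of `3` remain. -/
def progressionLeaves (n k : ℕ) : Finset ℕ :=
  leafLabels (n * k) (fun i : Fin n ↦ 5 + 6 * i.val) (fun i : Fin n ↦ 1 + 6 * i.val)

lemma card_progressionLeaves (n : ℕ) {k : ℕ} (hk : 3 ≤ k) :
    #(progressionLeaves n k) = n * (k - 2) :=
  (isSpineLabeling_progressions n hk).card_leafLabels

lemma three_add_six_mul_mem_progressionLeaves (hk : 3 ≤ k) {i : ℕ} (hi : i < n) :
    3 + 6 * i ∈ progressionLeaves n k := by
  have hnk : n * 3 ≤ n * k := Nat.mul_le_mul_left n hk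
  refine mem_leafLabels.2 ⟨mem_oddLabels.2 ⟨by lia, 1 + 3 * i, by ring⟩, ?_⟩
  rintro (j | j) h <;> simp only [Sum.elim_inl, Sum.elim_inr] at h <;> lia

lemma six_mul_add_one_add_two_mul_mem_progressionLeaves (hk : 3 ≤ k) {i : ℕ}
    (hi : i < n * (k - 3)) : 6 * n + 1 + 2 * i ∈ progressionLeaves n k := by
  have hnk : n * (k - 3) + n * 3 = n * k := by rw [← mul_add, Nat.sub_add_cancel hk]
  refine mem_leafLabels.2 ⟨mem_oddLabels.2 ⟨by lia, 3 * n + i, by ring⟩, ?_⟩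
  rintro (j | j) h <;> simp only [Sum.elim_inl, Sum.elim_inr] at h <;> lia

lemma card_add_card_le_card_filter_progressionLeaves (hk : 3 ≤ k) (P : ℕ → Prop)
    [DecidablePred P] :
    #{i ∈ range n | P (3 + 6 * i)} + #{i ∈ range (n * (k - 3)) | P (6 * n + 1 + 2 * i)} ≤
      #{y ∈ progressionLeaves n k | P y} := by
  rw [← card_image_of_injective {i ∈ range n | P (3 + 6 * i)} (f := (3 + 6 * ·))
    fun i j h ↦ by lia, ← card_image_of_injective (filter _ _) (f := (6 * n + 1 + 2 * ·))
    fun i j h ↦ by lia, ← card_union_of_disjoint]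
  · refine card_le_card (union_subset ?_ ?_) <;> refine image_subset_iff.2 fun i hi ↦ ?_ <;>
      obtain ⟨hi, hPi⟩ := mem_filter.1 hi <;> refine mem_filter.2 ⟨?_, hPi⟩
    · exact three_add_six_mul_mem_progressionLeaves hk (mem_range.1 hi)
    · exact six_mul_add_one_add_two_mul_mem_progressionLeaves hk (mem_range.1 hi)
  · simp only [disjoint_left, mem_image, mem_filter, mem_range]
    rintro _ ⟨i, ⟨hi, -⟩, rfl⟩ ⟨j, -, h⟩
    lia

lemma le_card_progressionLeaves_coprime (hk : 4 ≤ k) {c : ℕ} (hc : c.Coprime 6) (hc0 : c ≠ 0)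
    (hcn : 45 * c ≤ n ^ 2) :
    5 / 6 * density c * #(progressionLeaves n k) ≤ #{y ∈ progressionLeaves n k | c.Coprime y} := by
  obtain ⟨l, rfl⟩ := Nat.exists_eq_add_of_le hk
  have hlow := le_card_range_forall_not_dvd dvd_rfl c 3 n
  have hhigh := le_card_range_forall_not_dvd (D := 2) (by norm_num) c (6 * n + 1) (n * (l + 1))
  have hsum : (#{i ∈ range n | ∀ p ∈ largePrimeFactors c, ¬ p ∣ 3 + 6 * i} : ℝ) +
      #{i ∈ range (n * (l + 1)) | ∀ p ∈ largePrimeFactors c, ¬ p ∣ 6 * n + 1 + 2 * i} ≤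
      #{y ∈ progressionLeaves n (4 + l) | c.Coprime y} := by
    simp_rw [coprime_iff_forall_largePrimeFactors hc0 (hc.coprime_dvd_left (Nat.gcd_dvd_left _ _))]
    rw [show l + 1 = 4 + l - 3 by lia]
    exact_mod_cast card_add_card_le_card_filter_progressionLeaves (by lia)
      fun y ↦ ∀ p ∈ largePrimeFactors c, ¬ p ∣ y
  have hrest : 0 ≤ (n : ℝ) * l * density c := by
    have := density_pos c
    positivity
  rw [card_progressionLeaves n (by lia), show 4 + l - 2 = l + 2 by lia]
  push_cast at hhigh ⊢
  linarith [six_mul_two_pow_le hc0 hcn]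

lemma le_card_centres_coprime {y : ℕ} (hy0 : y ≠ 0) (hyn : 45 * y ≤ n ^ 2) :
    5 / 6 * density y * n ≤ #{i : Fin n | (1 + 6 * i.val).Coprime y} := by
  have hcard : #{i : Fin n | (1 + 6 * i.val).Coprime y} =
      #{i ∈ range n | ∀ p ∈ largePrimeFactors y, ¬ p ∣ 1 + 6 * i} := by
    simp_rw [← coprime_iff_forall_largePrimeFactors hy0
      ((one_add_six_mul_coprime_six _).coprime_dvd_left (Nat.gcd_dvd_right _ _)),
      Nat.coprime_comm (n := y), card_filter]
    exact Fin.sum_univ_eq_sum_range (fun i ↦ if (1 + 6 * i).Coprime y then 1 else 0) n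
  rw [hcard]
  linarith [le_card_range_forall_not_dvd dvd_rfl y 1 n, six_mul_two_pow_le hy0 hyn]

theorem isOddPrime_of_ninety_mul_le (hk : 4 ≤ k) (hkn : 90 * k ≤ n) :
    IsOddPrime (firecracker n k) := by
  have hn : 0 < n := by lia
  have hcard : #(progressionLeaves n k) = n * (k - 2) := card_progressionLeaves n (by lia)
  have hmem_Ioc {y : ℕ} (hy : y ∈ progressionLeaves n k) : y ∈ Ioc 0 (2 * (n * k)) := by
    obtain ⟨hlt, hodd⟩ := mem_oddLabels.1 (mem_leafLabels.1 hy).1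
    exact mem_Ioc.2 ⟨hodd.pos, hlt.le⟩
  have density_le {c : ℕ} {d x : ℝ} (hc : 0 < c) (h : 5 / 6 * d * c ≤ x * c) : d ≤ 6 / 5 * x := by
    linarith [le_of_mul_le_mul_right h (Nat.cast_pos.2 hc)]
  suffices hleaves : ∃ w : Fin n × Fin (k - 2) → ℕ, Injective w ∧
      ∀ a, w a ∈ progressionLeaves n k ∧ (1 + 6 * a.1.val).Coprime (w a) by
    obtain ⟨w, hw, hmem⟩ := hleaves
    exact (isSpineLabeling_progressions n (by lia)).isOddPrime (by lia) hw
      (fun a ↦ (hmem a).1) fun a ↦ (hmem a).2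
  refine exists_injective_of_card_low_degree_le (fun (i : Fin n) y ↦ (1 + 6 * i.val).Coprime y)
    (by rw [hcard, Fintype.card_fin]) (fun x hx0 hx ↦ ?_) fun x hx0 hx ↦ ?_
  · rw [Fintype.card_fin, ← card_image_of_injective _ (f := fun i : Fin n ↦ 1 + 6 * i.val)
      fun i j h ↦ Fin.ext (by lia)]
    refine card_le_of_density_le (M := 6 * n) (image_subset_iff.2 fun i _ ↦ mem_Ioc.2 (by lia))
      (by push_cast; rfl) hx0 hx (forall_mem_image.2 fun i hi ↦ ?_)
    refine density_le ?_ ((le_card_progressionLeaves_coprime hk (one_add_six_mul_coprime_six i.val)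
      (by lia) (by nlinarith [i.2])).trans (mem_filter.1 hi).2)
    rw [hcard]
    exact Nat.mul_pos hn (by lia)
  · rw [Fintype.card_fin]
    refine card_le_of_density_le (M := 2 * (n * k)) (fun y hy ↦ hmem_Ioc (mem_filter.1 hy).1) ?_
      hx0 hx fun y hy ↦ ?_
    · rw [hcard]
      have := Nat.mul_le_mul_left n (show 2 * k ≤ 6 * (k - 2) by lia)
      exact_mod_cast show 2 * (n * k) ≤ 6 * (n * (k - 2)) by lia
    · obtain ⟨hyL, hdeg⟩ := mem_filter.1 hy
      obtain ⟨hy0, hyle⟩ := mem_Ioc.1 (hmem_Ioc hyL)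
      exact density_le hn ((le_card_centres_coprime hy0.ne' (by nlinarith)).trans hdeg)

end Firecracker

/-- The firecracker graph `F_{n,k}` is odd prime for all `n > 1` and `k ≥ 3`. -/
theorem firecracker_oddPrime (n k : ℕ) (hn : 1 < n) (hk : 3 ≤ k) :
    IsOddPrime (firecracker n k) := by
  rcases le_or_gt k 13 with hk13 | hk13
  · exact Firecracker.isOddPrime_of_le_thirteen hk hk13
  rcases le_total n (90 * k) with hnk | hnk
  · exact Firecracker.isOddPrime_of_le_ninety_mul hn hk13 hnk
  · exact Firecracker.isOddPrime_of_ninety_mul_le (by lia) hnk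
end
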